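/- arXiv:2402.14319 — 2 statements merged into one kernel-verified Lean document; each statement's English description precedes it below -/
import Mathlib

section
/- Let n ≥ 1, p = 1 + 2/n, T_* ∈ (0,∞), and γ ∈ [0, n/2). Then there exist ε > 0 and C > 0 (depending only on T_*, n, γ) with the following property: if φ is locally integrable on ℝ^n and |||φ|||_{1,n/2;T^{1/2}} ≤ ε for some T ∈ (0,T_*], then there exists a solution u of ∂_t u − Δu = |u|^{p−1}u on ℝ^n × (0,T) with initial data φ (in the Duhamel integral sense) satisfying, for all t ∈ (0,T): |||u(t)|||_{1,n/2;T^{1/2}} ≤ C |||φ|||_{1,n/2;T^{1/2}}; |||u(t)|||_{p,γ;T^{1/2}} ≤ C t^{−(n/2)(1−1/p)} [log(e+1/t)]^{−n/2 + γ/p} |||φ|||_{1,n/2;T^{1/2}}; and ‖u(t)‖_{L^∞} ≤ C t^{−n/2} [log(e+1/t)]^{−n/2} |||φ|||_{1,n/2;T^{1/2}}. -/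
open MeasureTheory Real Set ENNReal

noncomputable def logFac (s : ℝ) : ℝ := Real.log (Real.exp 1 + 1 / s)

noncomputable def zygNorm (n : ℕ) (q α : ℝ)
    (f : EuclideanSpace ℝ (Fin n) → ℝ) : ℝ≥0∞ :=
  ⨆ s : Set.Ioi (0 : ℝ),
    (ENNReal.ofReal (logFac s.1) ^ α *
      ⨆ E : {E : Set (EuclideanSpace ℝ (Fin n)) //
          MeasurableSet E ∧ volume E = ENNReal.ofReal s.1},
        ∫⁻ x in E.1, ENNReal.ofReal (|f x| ^ q)) ^ (1 / q)

noncomputable def zygNormUL (n : ℕ) (q α ρ : ℝ)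
    (f : EuclideanSpace ℝ (Fin n) → ℝ) : ℝ≥0∞ :=
  ⨆ z : EuclideanSpace ℝ (Fin n),
    zygNorm n q α ((Metric.ball z ρ).indicator f)

noncomputable def heatKernel (n : ℕ) (x : EuclideanSpace ℝ (Fin n)) (t : ℝ) : ℝ :=
  (4 * Real.pi * t) ^ (-(n : ℝ) / 2) * Real.exp (-‖x‖ ^ 2 / (4 * t))

/-- `u` is a solution of `∂ₜu − Δu = |u|^{p−1}u` on `ℝ^n × (0,T)` with initial data `φ`,
in the Duhamel integral sense. -/
def IsSolution (n : ℕ) (p T : ℝ) (φ : EuclideanSpace ℝ (Fin n) → ℝ)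
    (u : EuclideanSpace ℝ (Fin n) → ℝ → ℝ) : Prop :=
  Measurable (fun q : EuclideanSpace ℝ (Fin n) × ℝ => u q.1 q.2) ∧
  ∀ᵐ q : EuclideanSpace ℝ (Fin n) × ℝ
      ∂(volume.prod (volume.restrict (Set.Ioo 0 T))),
    Integrable (fun y => heatKernel n (q.1 - y) q.2 * φ y) volume ∧
    Integrable (fun ys : EuclideanSpace ℝ (Fin n) × ℝ =>
        heatKernel n (q.1 - ys.1) (q.2 - ys.2) * (|u ys.1 ys.2| ^ (p - 1) * u ys.1 ys.2))
      (volume.prod (volume.restrict (Set.Ioo 0 q.2))) ∧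
    u q.1 q.2 = (∫ y, heatKernel n (q.1 - y) q.2 * φ y) +
      ∫ s in Set.Ioo 0 q.2, ∫ y,
        heatKernel n (q.1 - y) (q.2 - s) * (|u y s| ^ (p - 1) * u y s)

/-!
The critical power makes the scale-invariant class `L¹`, in which the source `|u| ^ p` of the heat
flow barely fails to be integrable in time: it has mass of order `1 / t`. The logarithmic weight
repairs this. If `u(t)` has weighted mass at most `M` and
`|u(t)| ≤ M (t log (e + 1 / t)) ^ (-n / 2)`, then `|u(t)| ^ p` has mass of order
`M ^ p t⁻¹ log (e + 1 / t) ^ (-n / 2 - 1)`, which is integrable near `t = 0`. The integral of its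
Duhamel term over a set `E` is controlled by the mass of the source for times below
`|E| ^ (2 / n)` and by its supremum for later times, and both contributions are of order
`M ^ p log (e + 1 / |E|) ^ (-n / 2)`. The two bounds therefore persist under Picard iteration for
small data.

All estimates are carried out for functions with values in `[0, ∞]`. Monotone iteration from the
datum `|φ|` gives a finite solution `W`. For the signed datum one looks for `u = v - W`, where `v`
solves `v = 2 S(t) φ⁺ + ∫ S(t - s) (W ^ p + |v - W| ^ (p - 1) (v - W))`: this nonlinearity is
increasing in `v` and `2 W` is a supersolution, so `v` is again a monotone limit, `0 ≤ v ≤ 2 W`, and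
`|u| ≤ W`.
-/

open Filter Topology
open scoped NNReal

local notation "𝔼" n:max => EuclideanSpace ℝ (Fin n)

section LogFac

variable {a b c m s t : ℝ}

lemma one_le_logFac (hs : 0 ≤ s) : 1 ≤ logFac s := by
  rw [logFac, Real.le_log_iff_exp_le (by positivity)]
  exact le_add_of_nonneg_right (by positivity)

lemma logFac_pos (hs : 0 ≤ s) : 0 < logFac s :=
  one_pos.trans_le (one_le_logFac hs)

lemma antitoneOn_logFac : AntitoneOn logFac (Ioi 0) := by
  intro s (hs : 0 < s) t (ht : 0 < t) hst
  rw [logFac, logFac]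
  gcongr

lemma measurable_logFac : Measurable logFac := by
  unfold logFac
  fun_prop

lemma tendsto_logFac_nhdsGT_zero : Tendsto logFac (𝓝[>] 0) atTop := by
  refine Real.tendsto_log_atTop.comp (tendsto_atTop_add_const_left _ _ ?_)
  exact tendsto_inv_nhdsGT_zero.congr fun s => (one_div s).symm

lemma hasDerivAt_logFac (hs : 0 < s) :
    HasDerivAt logFac (-(s * (Real.exp 1 * s + 1))⁻¹) s := by
  have h : HasDerivAt (fun s : ℝ => Real.exp 1 + 1 / s) (-(s ^ 2)⁻¹) s := by
    simpa only [one_div] using (hasDerivAt_inv hs.ne').const_add (Real.exp 1)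
  refine (h.log (by positivity)).congr_deriv ?_
  field_simp

lemma logFac_rpow_le_rpow_of_le (hm : m ≤ 0) (hs : 0 < s) (hst : s ≤ t) :
    logFac s ^ m ≤ logFac t ^ m :=
  Real.rpow_le_rpow_of_nonpos (logFac_pos (hs.trans_le hst).le)
    (antitoneOn_logFac hs (hs.trans_le hst) hst) hm

lemma logFac_mul_rpow_le (hc : 0 < c) (ha : 0 ≤ a) (hs : 0 < s) :
    logFac (c * s ^ a) ≤ (logFac c + a) * logFac s := by
  have h_inv : 1 / (c * s ^ a) = 1 / c * (1 / s) ^ a := by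
    rw [Real.div_rpow one_pos.le hs.le, Real.one_rpow, div_mul_div_comm, one_mul]
  have h_exp : 1 ≤ Real.exp 1 + 1 / s := by
    linarith [Real.add_one_le_exp 1, one_div_pos.2 hs]
  have h_prod : Real.exp 1 + 1 / (c * s ^ a) ≤
      (Real.exp 1 + 1 / c) * (Real.exp 1 + 1 / s) ^ a := by
    rw [h_inv, add_mul]
    gcongr
    · exact le_mul_of_one_le_right (Real.exp_pos 1).le (Real.one_le_rpow h_exp ha)
    · exact le_add_of_nonneg_left (Real.exp_pos 1).le
  calc logFac (c * s ^ a)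
      ≤ Real.log ((Real.exp 1 + 1 / c) * (Real.exp 1 + 1 / s) ^ a) :=
        Real.log_le_log (by positivity) h_prod
    _ = logFac c + a * logFac s := by
        rw [Real.log_mul (by positivity) (by positivity), Real.log_rpow (by positivity), logFac,
          logFac]
    _ ≤ logFac c * logFac s + a * logFac s := by
        gcongr
        exact le_mul_of_one_le_right (logFac_pos hc.le).le (one_le_logFac hs.le)
    _ = (logFac c + a) * logFac s := by ring

lemma exists_logFac_mul_rpow_rpow_le (hc : 0 < c) (ha : 0 < a) (m : ℝ) :
    ∃ K : ℝ≥0, ∀ s, 0 < s → logFac (c * s ^ a) ^ m ≤ K * logFac s ^ m := by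
  rcases le_total 0 m with hm | hm
  · have hK : 0 ≤ logFac c + a := add_nonneg (logFac_pos hc.le).le ha.le
    refine ⟨.mk ((logFac c + a) ^ m) (by positivity), fun s hs => ?_⟩
    rw [NNReal.coe_mk, ← Real.mul_rpow hK (logFac_pos hs.le).le]
    exact Real.rpow_le_rpow (logFac_pos (by positivity)).le (logFac_mul_rpow_le hc ha.le hs) hm
  · set d := c ^ (-a⁻¹) with hd
    have hd0 : 0 < d := by positivity
    have hK : 0 < logFac d + a⁻¹ := add_pos (logFac_pos hd0.le) (by positivity)
    refine ⟨.mk ((logFac d + a⁻¹) ^ (-m)) (by positivity), fun s hs => ?_⟩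
    have h_inv : d * (c * s ^ a) ^ a⁻¹ = s := by
      rw [Real.mul_rpow hc.le (by positivity), ← Real.rpow_mul hs.le, mul_inv_cancel₀ ha.ne',
        Real.rpow_one, ← mul_assoc, hd, ← Real.rpow_add hc, neg_add_cancel, Real.rpow_zero,
        one_mul]
    have h_le := logFac_mul_rpow_le hd0 (inv_pos.2 ha).le (s := c * s ^ a) (by positivity)
    rw [h_inv] at h_le
    have hcs : 0 < logFac (c * s ^ a) := logFac_pos (by positivity)
    calc logFac (c * s ^ a) ^ m
        = (logFac d + a⁻¹) ^ (-m) * ((logFac d + a⁻¹) * logFac (c * s ^ a)) ^ m := by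
          rw [Real.mul_rpow hK.le hcs.le, ← mul_assoc, ← Real.rpow_add hK, neg_add_cancel,
            Real.rpow_zero, one_mul]
      _ ≤ (logFac d + a⁻¹) ^ (-m) * logFac s ^ m :=
          mul_le_mul_of_nonneg_left (Real.rpow_le_rpow_of_nonpos (logFac_pos hs.le) h_le hm)
            (by positivity)

lemma logFac_inv_add_one_le {d k : ℝ} (hd : 0 < d) (hk : 1 ≤ k) :
    logFac k⁻¹ + 1 ≤ ((Real.exp 1 + 1) ^ d / d + 1) * k ^ d := by
  have hk0 : 0 < k := one_pos.trans_le hk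
  have h_base : Real.exp 1 + k ≤ (Real.exp 1 + 1) * k := by
    nlinarith [Real.exp_pos 1]
  have h_logFac : logFac k⁻¹ ≤ (Real.exp 1 + 1) ^ d / d * k ^ d := by
    rw [logFac, one_div, inv_inv, div_mul_eq_mul_div, ← Real.mul_rpow (by positivity) hk0.le]
    exact (Real.log_le_rpow_div (by positivity) hd).trans (by gcongr)
  rw [add_mul, one_mul]
  exact add_le_add h_logFac (Real.one_le_rpow hk hd.le)

lemma exists_rpow_mul_logFac_rpow_le (hb : 0 < b) (hm : 0 ≤ m) :
    ∃ C : ℝ≥0, ∀ r s, 0 < r → r ≤ s →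
      r ^ b * logFac r ^ m ≤ C * (s ^ b * logFac s ^ m) := by
  set d := b / (m + 1) with hd
  have hd0 : 0 < d := by positivity
  have hdm : d * m ≤ b := by
    rw [hd, div_mul_eq_mul_div, div_le_iff₀ (by positivity)]
    nlinarith
  set K := (Real.exp 1 + 1) ^ d / d + 1
  refine ⟨.mk (K ^ m) (by positivity), fun r s hr hrs => ?_⟩
  have hs : 0 < s := hr.trans_le hrs
  set k := s / r with hk
  have hk1 : 1 ≤ k := (one_le_div hr).2 hrs
  have hk0 : 0 < k := one_pos.trans_le hk1
  have hLs := logFac_pos hs.le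
  have h_log : logFac k⁻¹ + 1 ≤ K * k ^ d := logFac_inv_add_one_le hd0 hk1
  have h_le : logFac r ≤ K * k ^ d * logFac s := by
    have h := logFac_mul_rpow_le (inv_pos.2 hk0) one_pos.le hs
    rw [Real.rpow_one, hk, inv_div, div_mul_cancel₀ _ hs.ne', ← inv_div] at h
    exact h.trans (by gcongr)
  calc r ^ b * logFac r ^ m
      ≤ r ^ b * (K * k ^ d * logFac s) ^ m := by
        gcongr
        exact (logFac_pos hr.le).le
    _ = r ^ b * (K ^ m * k ^ (d * m) * logFac s ^ m) := by
        rw [Real.mul_rpow (by positivity) hLs.le, Real.mul_rpow (by positivity) (by positivity),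
          ← Real.rpow_mul hk0.le]
    _ ≤ r ^ b * (K ^ m * k ^ b * logFac s ^ m) := by
        gcongr
    _ = K ^ m * ((r * k) ^ b * logFac s ^ m) := by
        rw [Real.mul_rpow hr.le hk0.le]
        ring
    _ = K ^ m * (s ^ b * logFac s ^ m) := by rw [hk, mul_div_cancel₀ _ hr.ne']

end LogFac

section Integrals

lemma ofReal_le_coe_mul_ofReal {x y : ℝ} {C : ℝ≥0} (h : x ≤ C * y) :
    ENNReal.ofReal x ≤ C * ENNReal.ofReal y := by
  rw [← ENNReal.ofReal_coe_nnreal, ← ENNReal.ofReal_mul C.coe_nonneg]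
  exact ENNReal.ofReal_le_ofReal h

lemma lintegral_Ioc_ofReal_deriv_of_nonneg {f f' : ℝ → ℝ} {a b l : ℝ} (hab : a < b)
    (hlim : Tendsto f (𝓝[>] a) (𝓝 l)) (hderiv : ∀ s ∈ Ioc a b, HasDerivAt f (f' s) s)
    (hnonneg : ∀ s ∈ Ioc a b, 0 ≤ f' s) :
    ∫⁻ s in Ioc a b, ENNReal.ofReal (f' s) = ENNReal.ofReal (f b - l) := by
  set g := Function.update f a l with hg
  have hgf : ∀ s ∈ Ioi a, g s = f s := fun s hs => Function.update_of_ne (ne_of_gt hs) _ _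
  have hg_deriv : ∀ s ∈ Ioo a b, HasDerivAt g (f' s) s := fun s hs =>
    (hderiv s (Ioo_subset_Ioc_self hs)).congr_of_eventuallyEq
      (eventually_of_mem (Ioi_mem_nhds hs.1) hgf)
  have hg_cont : ContinuousOn g (Icc a b) := by
    rw [hg, continuousOn_update_iff, Icc_sdiff_left]
    exact ⟨fun s hs => (hderiv s hs).continuousAt.continuousWithinAt,
      fun _ => hlim.mono_left (nhdsWithin_mono a fun s hs => hs.1)⟩
  have hf'_int : IntegrableOn f' (Ioc a b) :=
    intervalIntegral.integrableOn_deriv_of_nonneg hg_cont hg_deriv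
      fun s hs => hnonneg s (Ioo_subset_Ioc_self hs)
  have h_ftc := intervalIntegral.integral_eq_sub_of_hasDerivAt_of_le hab.le hg_cont hg_deriv
    ((intervalIntegrable_iff_integrableOn_Ioc_of_le hab.le).2 hf'_int)
  rw [intervalIntegral.integral_of_le hab.le, hgf b hab, hg, Function.update_self] at h_ftc
  rw [← h_ftc, ofReal_integral_eq_lintegral_ofReal hf'_int
    (ae_restrict_of_forall_mem measurableSet_Ioc hnonneg)]

variable {a b m T : ℝ}

lemma lintegral_Ioc_deriv_logFac_rpow (ha : 0 < a) (hT : 0 < T) :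
    ∫⁻ s in Ioc 0 T, ENNReal.ofReal
        (a * (logFac s ^ (-(a + 1)) * (s * (Real.exp 1 * s + 1))⁻¹)) =
      ENNReal.ofReal (logFac T ^ (-a)) := by
  have hlim : Tendsto (fun s => logFac s ^ (-a)) (𝓝[>] 0) (𝓝 0) :=
    (tendsto_rpow_neg_atTop ha).comp tendsto_logFac_nhdsGT_zero
  rw [lintegral_Ioc_ofReal_deriv_of_nonneg hT hlim, sub_zero]
  · intro s hs
    refine ((hasDerivAt_logFac hs.1).rpow_const (Or.inl (logFac_pos hs.1.le).ne')).congr_deriv ?_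
    rw [neg_add']
    ring
  · intro s hs
    have := hs.1
    have := logFac_pos hs.1.le
    positivity

lemma exists_lintegral_Ioc_inv_mul_logFac_rpow_le (ha : 0 < a) (hT : 0 < T) :
    ∃ C : ℝ≥0, ∀ r, 0 < r → r ≤ T →
      ∫⁻ s in Ioc 0 r, ENNReal.ofReal (s⁻¹ * logFac s ^ (-(a + 1))) ≤
        C * ENNReal.ofReal (logFac r ^ (-a)) := by
  refine ⟨.mk ((Real.exp 1 * T + 1) / a) (by positivity), fun r hr hrT => ?_⟩
  rw [← lintegral_Ioc_deriv_logFac_rpow ha hr, ← lintegral_const_mul' _ _ coe_ne_top]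
  refine setLIntegral_mono' measurableSet_Ioc fun s hs => ofReal_le_coe_mul_ofReal ?_
  have hs0 := hs.1
  have hL := logFac_pos hs0.le
  have hsT : s ≤ T := hs.2.trans hrT
  calc s⁻¹ * logFac s ^ (-(a + 1))
      ≤ (Real.exp 1 * T + 1) / (Real.exp 1 * s + 1) * (s⁻¹ * logFac s ^ (-(a + 1))) := by
        refine le_mul_of_one_le_left (by positivity) ((one_le_div (by positivity)).2 ?_)
        gcongr
    _ = (Real.exp 1 * T + 1) / a *
          (a * (logFac s ^ (-(a + 1)) * (s * (Real.exp 1 * s + 1))⁻¹)) := by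
        field_simp

lemma lintegral_Ioi_rpow_neg_add_one (ha : 0 < a) {r : ℝ} (hr : 0 < r) :
    ∫⁻ s in Ioi r, ENNReal.ofReal (s ^ (-(a + 1))) = ENNReal.ofReal (a⁻¹ * r ^ (-a)) := by
  have h_exp : -(a + 1) < -1 := by linarith
  rw [← ofReal_integral_eq_lintegral_ofReal (integrableOn_Ioi_rpow_of_lt h_exp hr)
      (ae_restrict_of_forall_mem measurableSet_Ioi fun s hs =>
        Real.rpow_nonneg (hr.trans hs).le _),
    integral_Ioi_rpow_of_lt h_exp hr, neg_add, neg_add_cancel_right, neg_div_neg_eq,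
    div_eq_inv_mul]

lemma exists_rpow_neg_mul_logFac_rpow_neg_le (hb : 0 < b) (hm : 0 ≤ m) :
    ∃ C : ℝ≥0, ∀ r s, 0 < r → r ≤ s →
      s ^ (-b) * logFac s ^ (-m) ≤ C * (r ^ (-b) * logFac r ^ (-m)) := by
  obtain ⟨C, hC⟩ := exists_rpow_mul_logFac_rpow_le hb hm
  refine ⟨C, fun r s hr hrs => ?_⟩
  have hs : 0 < s := hr.trans_le hrs
  have hLr := logFac_pos hr.le
  have hLs := logFac_pos hs.le
  rw [Real.rpow_neg hs.le, Real.rpow_neg hr.le, Real.rpow_neg hLs.le, Real.rpow_neg hLr.le,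
    ← mul_inv, ← mul_inv, ← div_eq_mul_inv, le_div_iff₀ (by positivity),
    inv_mul_le_iff₀ (by positivity), mul_comm _ (C : ℝ)]
  exact hC r s hr hrs

lemma exists_lintegral_Ioi_rpow_mul_logFac_rpow_le (ha : 0 < a) (hm : 0 ≤ m) :
    ∃ C : ℝ≥0, ∀ r, 0 < r →
      ∫⁻ s in Ioi r, ENNReal.ofReal (s ^ (-(a + 1)) * logFac s ^ (-m)) ≤
        C * ENNReal.ofReal (r ^ (-a) * logFac r ^ (-m)) := by
  obtain ⟨C, hC⟩ := exists_rpow_neg_mul_logFac_rpow_neg_le (half_pos ha) hm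
  refine ⟨C * .mk ((a / 2)⁻¹) (by positivity), fun r hr => ?_⟩
  have hLr := logFac_pos hr.le
  have h_rpow : r ^ (-a) = r ^ (-(a / 2)) * r ^ (-(a / 2)) := by
    rw [← Real.rpow_add hr]
    ring_nf
  -- Half of the decay of `s ^ (-a)` pays for replacing `logFac s` by `logFac r`.
  have h_le : ∀ s ∈ Ioi r, s ^ (-(a + 1)) * logFac s ^ (-m) ≤
      C * (r ^ (-(a / 2)) * logFac r ^ (-m)) * s ^ (-(a / 2 + 1)) := by
    intro s (hrs : r < s)
    have hs : 0 < s := hr.trans hrs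
    calc s ^ (-(a + 1)) * logFac s ^ (-m)
        = s ^ (-(a / 2)) * logFac s ^ (-m) * s ^ (-(a / 2 + 1)) := by
          rw [mul_right_comm, ← Real.rpow_add hs]
          ring_nf
      _ ≤ _ := by grw [hC r s hr hrs.le]
  calc ∫⁻ s in Ioi r, ENNReal.ofReal (s ^ (-(a + 1)) * logFac s ^ (-m))
      ≤ ∫⁻ s in Ioi r, ENNReal.ofReal (C * (r ^ (-(a / 2)) * logFac r ^ (-m))) *
          ENNReal.ofReal (s ^ (-(a / 2 + 1))) := by
        refine setLIntegral_mono' measurableSet_Ioi fun s hs => ?_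
        rw [← ENNReal.ofReal_mul (by positivity)]
        exact ENNReal.ofReal_le_ofReal (h_le s hs)
    _ = ENNReal.ofReal (C * (r ^ (-(a / 2)) * logFac r ^ (-m)) *
          ((a / 2)⁻¹ * r ^ (-(a / 2)))) := by
        rw [lintegral_const_mul' _ _ ofReal_ne_top,
          lintegral_Ioi_rpow_neg_add_one (by positivity) hr, ← ENNReal.ofReal_mul (by positivity)]
    _ ≤ _ := ofReal_le_coe_mul_ofReal <| le_of_eq <| by
        rw [h_rpow, NNReal.coe_mul, NNReal.coe_mk]
        ring

lemma exists_mul_lintegral_Ioi_mul_logFac_rpow_le (ha : 0 < a) :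
    ∃ C : ℝ≥0, ∀ r, 0 < r → ENNReal.ofReal (r ^ a) *
      ∫⁻ s in Ioi r, ENNReal.ofReal ((s * logFac s) ^ (-(a + 1))) ≤
        C * ENNReal.ofReal (logFac r ^ (-a)) := by
  obtain ⟨C, hC⟩ := exists_lintegral_Ioi_rpow_mul_logFac_rpow_le ha (m := a + 1) (by positivity)
  refine ⟨C, fun r hr => ?_⟩
  have h_split : ∀ s ∈ Ioi r, ENNReal.ofReal ((s * logFac s) ^ (-(a + 1))) =
      ENNReal.ofReal (s ^ (-(a + 1)) * logFac s ^ (-(a + 1))) := fun s hs => by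
    rw [Real.mul_rpow (hr.trans hs).le (logFac_pos (hr.trans hs).le).le]
  rw [setLIntegral_congr_fun measurableSet_Ioi h_split]
  grw [hC r hr]
  rw [mul_left_comm, ← ENNReal.ofReal_mul (by positivity), ← mul_assoc, ← Real.rpow_add hr,
    add_neg_cancel, Real.rpow_zero, one_mul]
  gcongr
  · exact one_le_logFac hr.le
  · linarith

-- The two integrands cross at `s = σ ^ a⁻¹`, where `logFac s` is comparable to `logFac σ`.
lemma exists_lintegral_min_le (ha : 0 < a) (hT : 0 < T) :
    ∃ C : ℝ≥0, ∀ σ, 0 < σ →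
      ∫⁻ s in Ioc 0 T, min (ENNReal.ofReal (s⁻¹ * logFac s ^ (-(a + 1))))
          (ENNReal.ofReal σ * ENNReal.ofReal ((s * logFac s) ^ (-(a + 1)))) ≤
        C * ENNReal.ofReal (logFac σ ^ (-a)) := by
  obtain ⟨C₁, hC₁⟩ := exists_lintegral_Ioc_inv_mul_logFac_rpow_le ha hT
  obtain ⟨C₂, hC₂⟩ := exists_mul_lintegral_Ioi_mul_logFac_rpow_le ha
  obtain ⟨K, hK⟩ := exists_logFac_mul_rpow_rpow_le one_pos (inv_pos.2 ha) (-a)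
  refine ⟨(C₁ + C₂) * K, fun σ hσ => ?_⟩
  set r := σ ^ a⁻¹ with hr
  have hr0 : 0 < r := by positivity
  have hσr : σ = r ^ a := by rw [hr, ← Real.rpow_mul hσ.le, inv_mul_cancel₀ ha.ne', Real.rpow_one]
  have hLr : logFac r ^ (-a) ≤ K * logFac σ ^ (-a) := by simpa only [one_mul] using hK σ hσ
  have h_short : ∫⁻ s in Ioc 0 (min r T), ENNReal.ofReal (s⁻¹ * logFac s ^ (-(a + 1))) ≤
      C₁ * ENNReal.ofReal (logFac r ^ (-a)) := by
    grw [hC₁ _ (lt_min hr0 hT) (min_le_right _ _),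
      logFac_rpow_le_rpow_of_le (neg_nonpos.2 ha.le) (lt_min hr0 hT) (min_le_left r T)]
  have h_long : ∫⁻ s in Ioi r, ENNReal.ofReal σ *
      ENNReal.ofReal ((s * logFac s) ^ (-(a + 1))) ≤ C₂ * ENNReal.ofReal (logFac r ^ (-a)) := by
    rw [lintegral_const_mul' _ _ ofReal_ne_top, hσr]
    exact hC₂ r hr0
  have h_cover : Ioc 0 T ⊆ Ioc 0 (min r T) ∪ Ioi r := fun s hs =>
    (le_or_gt s r).imp (fun h => ⟨hs.1, le_min h hs.2⟩) id
  refine (lintegral_mono_set h_cover).trans <| (lintegral_union_le _ _ _).trans ?_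
  calc _ ≤ C₁ * ENNReal.ofReal (logFac r ^ (-a)) + C₂ * ENNReal.ofReal (logFac r ^ (-a)) :=
        add_le_add ((lintegral_mono fun s => min_le_left _ _).trans h_short)
          ((lintegral_mono fun s => min_le_right _ _).trans h_long)
    _ ≤ _ := by
        grw [← add_mul, ofReal_le_coe_mul_ofReal hLr, coe_mul, coe_add, mul_assoc]

end Integrals

section ZygMass

/-- The `L¹` Zygmund functional of a nonnegative function, localised to balls of radius `ρ`: the
weight `(log (e + 1 / |E|)) ^ α` multiplies the integral over a measurable subset `E` of a ball.
For `q > 0` and `α ≥ 0`, `zygNormUL n q α ρ f` is the `q`-th root of `zygMass α ρ (|f| ^ q)`. Null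
sets `E` are harmless because their integral vanishes. -/
noncomputable def zygMass {X : Type*} [PseudoMetricSpace X] [MeasureSpace X] (α ρ : ℝ)
    (f : X → ℝ≥0∞) : ℝ≥0∞ :=
  ⨆ (z : X) (E : Set X) (_ : MeasurableSet E) (_ : E ⊆ Metric.ball z ρ),
    ENNReal.ofReal (logFac (volume.real E) ^ α) * ∫⁻ x in E, f x

variable {X : Type*} [PseudoMetricSpace X] [MeasureSpace X] {α ρ σ : ℝ} {f g : X → ℝ≥0∞}

lemma zygMass_le_iff {M : ℝ≥0∞} : zygMass α ρ f ≤ M ↔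
    ∀ z E, MeasurableSet E → E ⊆ Metric.ball z ρ →
      ENNReal.ofReal (logFac (volume.real E) ^ α) * ∫⁻ x in E, f x ≤ M := by
  simp only [zygMass, iSup_le_iff]

lemma le_zygMass {z : X} {E : Set X} (hE : MeasurableSet E) (hEz : E ⊆ Metric.ball z ρ) :
    ENNReal.ofReal (logFac (volume.real E) ^ α) * ∫⁻ x in E, f x ≤ zygMass α ρ f :=
  zygMass_le_iff.1 le_rfl z E hE hEz

lemma setLIntegral_le_zygMass_zero {z : X} {E : Set X} (hE : MeasurableSet E)
    (hEz : E ⊆ Metric.ball z ρ) : ∫⁻ x in E, f x ≤ zygMass 0 ρ f := by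
  simpa only [Real.rpow_zero, ofReal_one, one_mul] using le_zygMass (α := 0) hE hEz

lemma mul_setLIntegral_le_zygMass_of_measure_le (hα : 0 ≤ α) (hσ : 0 < σ) {z : X} {E : Set X}
    (hE : MeasurableSet E) (hEz : E ⊆ Metric.ball z ρ) (hEσ : volume E ≤ ENNReal.ofReal σ) :
    ENNReal.ofReal (logFac σ ^ α) * ∫⁻ x in E, f x ≤ zygMass α ρ f := by
  rcases eq_or_ne (volume E) 0 with h0 | h0
  · rw [setLIntegral_measure_zero E f h0, mul_zero]
    exact zero_le
  have h_pos : 0 < volume.real E := toReal_pos h0 (hEσ.trans_lt ofReal_lt_top).ne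
  refine le_trans ?_ (le_zygMass hE hEz)
  gcongr
  · exact (logFac_pos hσ.le).le
  · exact antitoneOn_logFac h_pos hσ (toReal_le_of_le_ofReal hσ.le hEσ)

lemma setLIntegral_le_zygMass_of_measure_le (hα : 0 ≤ α) (hσ : 0 < σ) {z : X} {E : Set X}
    (hE : MeasurableSet E) (hEz : E ⊆ Metric.ball z ρ) (hEσ : volume E ≤ ENNReal.ofReal σ) :
    ∫⁻ x in E, f x ≤ ENNReal.ofReal (logFac σ ^ (-α)) * zygMass α ρ f := by
  have hLσ := logFac_pos hσ.le
  have h_one : ENNReal.ofReal (logFac σ ^ (-α)) * ENNReal.ofReal (logFac σ ^ α) = 1 := by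
    rw [← ENNReal.ofReal_mul (by positivity), ← Real.rpow_add hLσ, neg_add_cancel,
      Real.rpow_zero, ofReal_one]
  rw [← one_mul (∫⁻ x in E, f x), ← h_one, mul_assoc]
  gcongr
  exact mul_setLIntegral_le_zygMass_of_measure_le hα hσ hE hEz hEσ

lemma zygMass_mono_ae (h : f ≤ᵐ[volume] g) : zygMass α ρ f ≤ zygMass α ρ g :=
  zygMass_le_iff.2 fun _ _ hE hEz =>
    (mul_le_mul_right (lintegral_mono_ae (ae_restrict_of_ae h)) _).trans (le_zygMass hE hEz)

lemma zygMass_mono (h : ∀ x, f x ≤ g x) : zygMass α ρ f ≤ zygMass α ρ g :=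
  zygMass_mono_ae (ae_of_all _ h)

lemma zygMass_mono_radius {r : ℝ} (h : r ≤ ρ) : zygMass α r f ≤ zygMass α ρ f :=
  zygMass_le_iff.2 fun _ _ hE hEz => le_zygMass hE (hEz.trans (Metric.ball_subset_ball h))

lemma zygMass_zero_le (hα : 0 ≤ α) : zygMass 0 ρ f ≤ zygMass α ρ f := by
  refine zygMass_le_iff.2 fun z E hE hEz => le_trans ?_ (le_zygMass hE hEz)
  gcongr
  exact one_le_logFac measureReal_nonneg

lemma zygMass_add_le (hf : Measurable f) :
    zygMass α ρ (fun x => f x + g x) ≤ zygMass α ρ f + zygMass α ρ g := by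
  refine zygMass_le_iff.2 fun z E hE hEz => ?_
  rw [lintegral_add_left hf, mul_add]
  exact add_le_add (le_zygMass hE hEz) (le_zygMass hE hEz)

lemma zygMass_const_mul_le (hf : Measurable f) (c : ℝ≥0∞) :
    zygMass α ρ (fun x => c * f x) ≤ c * zygMass α ρ f := by
  refine zygMass_le_iff.2 fun z E hE hEz => ?_
  rw [lintegral_const_mul c hf, mul_left_comm]
  gcongr
  exact le_zygMass hE hEz

lemma zygMass_iSup_le {f : ℕ → X → ℝ≥0∞} {M : ℝ≥0∞} (hf : ∀ k, Measurable (f k))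
    (hmono : Monotone f) (hM : ∀ k, zygMass α ρ (f k) ≤ M) :
    zygMass α ρ (fun x => ⨆ k, f k x) ≤ M := by
  refine zygMass_le_iff.2 fun z E hE hEz => ?_
  rw [lintegral_iSup hf hmono, ENNReal.mul_iSup]
  exact iSup_le fun k => zygMass_le_iff.1 (hM k) z E hE hEz

lemma zygMass_lintegral_le [SFinite (volume : Measure X)] {Y : Type*} [MeasurableSpace Y]
    {μ : Measure Y} [SFinite μ] {F : Y → X → ℝ≥0∞} (hF : Measurable (Function.uncurry F)) :
    zygMass α ρ (fun x => ∫⁻ y, F y x ∂μ) ≤ ∫⁻ y, zygMass α ρ (F y) ∂μ := by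
  refine zygMass_le_iff.2 fun z E hE hEz => ?_
  rw [lintegral_lintegral_swap (f := fun x y => F y x) (hF.comp measurable_swap).aemeasurable,
    ← lintegral_const_mul' _ _ ofReal_ne_top]
  exact lintegral_mono fun y => le_zygMass hE hEz

lemma zygMass_comp_sub_right_le {X : Type*} [SeminormedAddCommGroup X] [MeasureSpace X]
    [BorelSpace X] [(volume : Measure X).IsAddLeftInvariant] (f : X → ℝ≥0∞) (w : X) :
    zygMass α ρ (fun x => f (x - w)) ≤ zygMass α ρ f := by
  refine zygMass_le_iff.2 fun z E hE hEz => ?_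
  set E' := (fun x => x + w) ⁻¹' E with hE'
  have h_int : ∫⁻ x in E, f (x - w) = ∫⁻ x in E', f x := by
    rw [← (measurePreserving_add_right volume w).setLIntegral_comp_preimage_emb
      (measurableEmbedding_addRight w)]
    simp only [add_sub_cancel_right, E']
  have h_vol : volume.real E = volume.real E' := by
    rw [measureReal_def, measureReal_def, hE', measure_preimage_add_right]
  have h_ball : E' ⊆ Metric.ball (z - w) ρ := fun x hx => by
    have := hEz hx
    rwa [Metric.mem_ball, dist_eq_norm, sub_sub_eq_add_sub, ← dist_eq_norm]
  rw [h_int, h_vol]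
  exact le_zygMass (measurable_add_const w hE) h_ball

lemma indicator_ofReal_abs_rpow {ι : Type*} {q : ℝ} (hq : 0 < q) (s : Set ι) (f : ι → ℝ) :
    (fun x => ENNReal.ofReal (|s.indicator f x| ^ q)) =
      s.indicator fun x => ENNReal.ofReal (|f x| ^ q) := by
  ext x
  by_cases hx : x ∈ s <;> simp [hx, hq.ne']

lemma zygNormUL_eq {n : ℕ} {q : ℝ} (hq : 0 < q) (hα : 0 ≤ α) (f : 𝔼 n → ℝ) :
    zygNormUL n q α ρ f = zygMass α ρ (fun x => ENNReal.ofReal (|f x| ^ q)) ^ (1 / q) := by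
  simp only [zygNormUL, zygNorm, indicator_ofReal_abs_rpow hq,
    setLIntegral_indicator measurableSet_ball, one_div]
  have hL : ∀ s, 0 < s → ENNReal.ofReal (logFac s ^ α) = ENNReal.ofReal (logFac s) ^ α :=
    fun s hs => (ofReal_rpow_of_pos (logFac_pos hs.le)).symm
  refine le_antisymm (iSup_le fun z => iSup_le fun ⟨s, hs⟩ => ?_)
    ((ENNReal.rpow_inv_le_iff hq).2 <| zygMass_le_iff.2 fun z E hE hEz => ?_)
  · gcongr
    rw [← hL s hs, ENNReal.mul_iSup]
    refine iSup_le fun ⟨E, hE, hEs⟩ => ?_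
    exact mul_setLIntegral_le_zygMass_of_measure_le hα hs (measurableSet_ball.inter hE)
      inter_subset_left ((measure_mono inter_subset_right).trans hEs.le)
  · rcases eq_or_ne (volume E) 0 with h0 | h0
    · rw [setLIntegral_measure_zero E _ h0, mul_zero]
      exact zero_le
    have h_top : volume E ≠ ⊤ := ((measure_mono hEz).trans_lt measure_ball_lt_top).ne
    have h_pos : 0 < volume.real E := toReal_pos h0 h_top
    rw [← ENNReal.rpow_inv_le_iff hq, hL _ h_pos]
    refine le_iSup_of_le z (le_iSup_of_le ⟨volume.real E, h_pos⟩ ?_)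
    gcongr
    refine le_iSup_of_le ⟨E, hE, (ofReal_measureReal h_top).symm⟩ ?_
    simp only [inter_eq_self_of_subset_right hEz, le_refl]

end ZygMass

section HeatKernel

variable {n : ℕ} {t : ℝ}

lemma heatKernel_nonneg (ht : 0 ≤ t) (x : 𝔼 n) : 0 ≤ heatKernel n x t := by
  unfold heatKernel
  positivity

@[fun_prop]
lemma measurable_heatKernel {Y : Type*} [MeasurableSpace Y] {x : Y → 𝔼 n} {τ : Y → ℝ}
    (hx : Measurable x) (hτ : Measurable τ) : Measurable fun y => heatKernel n (x y) (τ y) := by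
  unfold heatKernel
  fun_prop

lemma lintegral_heatKernel (ht : 0 < t) :
    ∫⁻ x : 𝔼 n, ENNReal.ofReal (heatKernel n x t) = 1 := by
  have h_eq : (fun x : 𝔼 n => heatKernel n x t) = fun x =>
      (4 * π * t) ^ (-(n : ℝ) / 2) * Real.exp (-(1 / (4 * t)) * ‖x‖ ^ 2) := by
    ext x
    rw [heatKernel]
    congr 2
    ring
  have h_gauss := GaussianFourier.integral_rexp_neg_mul_sq_norm (V := 𝔼 n)
    (one_div_pos.2 (mul_pos four_pos ht))
  rw [div_div_eq_mul_div, div_one, ← mul_assoc, mul_comm π, finrank_euclideanSpace_fin] at h_gauss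
  have h_int : Integrable (fun x : 𝔼 n => heatKernel n x t) := by
    rw [h_eq]
    refine Integrable.const_mul (not_imp_comm.1 integral_undef ?_) _
    rw [h_gauss]
    positivity
  rw [← ofReal_integral_eq_lintegral_ofReal h_int (ae_of_all _ (heatKernel_nonneg ht.le)), h_eq,
    integral_const_mul, h_gauss, ← Real.rpow_add (by positivity), neg_div, neg_add_cancel,
    Real.rpow_zero, ofReal_one]

lemma heatKernel_le_mul_heatKernel_two_mul (ht : 0 < t) {w w' : 𝔼 n} (h : ‖w - w'‖ ^ 2 ≤ t) :
    heatKernel n w t ≤ Real.exp (1 / 4) * 2 ^ ((n : ℝ) / 2) * heatKernel n w' (2 * t) := by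
  have h_norm : ‖w'‖ ^ 2 ≤ 2 * ‖w‖ ^ 2 + 2 * t := by
    have h_tri : ‖w'‖ ≤ ‖w‖ + ‖w - w'‖ := by
      have h := norm_sub_le w (w - w')
      rwa [sub_sub_cancel w w'] at h
    nlinarith [sq_nonneg (‖w‖ - ‖w - w'‖), norm_nonneg w']
  have h_exp : -‖w‖ ^ 2 / (4 * t) ≤ 1 / 4 + -‖w'‖ ^ 2 / (4 * (2 * t)) := by
    rw [div_add_div _ _ four_ne_zero (by positivity),
      div_le_div_iff₀ (by positivity) (by positivity)]
    nlinarith [mul_le_mul_of_nonneg_left h_norm ht.le]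
  have h_scale : (2 : ℝ) ^ ((n : ℝ) / 2) * (4 * π * (2 * t)) ^ (-(n : ℝ) / 2) =
      (4 * π * t) ^ (-(n : ℝ) / 2) := by
    rw [mul_left_comm _ 2 t, Real.mul_rpow two_pos.le (by positivity), ← mul_assoc,
      ← Real.rpow_add two_pos, neg_div, add_neg_cancel, Real.rpow_zero, one_mul]
  calc heatKernel n w t
      ≤ (4 * π * t) ^ (-(n : ℝ) / 2) * Real.exp (1 / 4 + -‖w'‖ ^ 2 / (4 * (2 * t))) := by
        rw [heatKernel]
        gcongr
    _ = _ := by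
        rw [heatKernel, ← h_scale, Real.exp_add]
        ring

lemma volume_ball_sqrt (z : 𝔼 n) (ht : 0 < t) : volume (Metric.ball z √t) =
    ENNReal.ofReal (volume.real (Metric.ball (0 : 𝔼 n) 1) * t ^ ((n : ℝ) / 2)) := by
  have h_sqrt : √t ^ n = t ^ ((n : ℝ) / 2) := by
    rw [Real.sqrt_eq_rpow, ← Real.rpow_natCast, ← Real.rpow_mul ht.le, one_div_mul_eq_div]
  rw [Measure.addHaar_ball_of_pos _ _ (Real.sqrt_pos.2 ht), finrank_euclideanSpace_fin, h_sqrt,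
    mul_comm, ENNReal.ofReal_mul measureReal_nonneg, ofReal_measureReal measure_ball_lt_top.ne]

lemma volume_real_unitBall_pos (n : ℕ) : 0 < volume.real (Metric.ball (0 : 𝔼 n) 1) :=
  toReal_pos (Metric.measure_ball_pos _ _ one_pos).ne' measure_ball_lt_top.ne

end HeatKernel

section HeatFlow

/-- The heat semigroup `S(t)` acting on functions with values in `[0, ∞]`. -/
noncomputable def heatFlow {n : ℕ} (t : ℝ) (f : 𝔼 n → ℝ≥0∞) (x : 𝔼 n) : ℝ≥0∞ :=
  ∫⁻ y, ENNReal.ofReal (heatKernel n (x - y) t) * f y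

/-- The Duhamel term `∫₀ᵗ S(t - s) g(s) ds` of a source `g` with values in `[0, ∞]`. Functions of
space and time take the time variable first. -/
noncomputable def duhamel {n : ℕ} (g : ℝ → 𝔼 n → ℝ≥0∞) (t : ℝ) (x : 𝔼 n) : ℝ≥0∞ :=
  ∫⁻ s in Ioo 0 t, heatFlow (t - s) (g s) x

variable {n : ℕ} {t α ρ : ℝ} {f g : 𝔼 n → ℝ≥0∞}

@[fun_prop]
lemma measurable_heatFlow {Y : Type*} [MeasurableSpace Y] {τ : Y → ℝ} {f : Y → 𝔼 n → ℝ≥0∞}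
    {x : Y → 𝔼 n} (hτ : Measurable τ) (hf : Measurable (Function.uncurry f))
    (hx : Measurable x) : Measurable fun y => heatFlow (τ y) (f y) (x y) := by
  unfold heatFlow
  refine Measurable.lintegral_prod_right' (f := fun p : Y × 𝔼 n =>
    ENNReal.ofReal (heatKernel n (x p.1 - p.2) (τ p.1)) * f p.1 p.2) ?_
  exact Measurable.mul (by fun_prop) hf

lemma measurable_duhamel {g : ℝ → 𝔼 n → ℝ≥0∞} (hg : Measurable (Function.uncurry g)) :
    Measurable (Function.uncurry (duhamel g)) := by
  have h_eq : Function.uncurry (duhamel g) = fun q : ℝ × 𝔼 n => ∫⁻ s,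
      {p : (ℝ × 𝔼 n) × ℝ | 0 < p.2 ∧ p.2 < p.1.1}.indicator
        (fun p => heatFlow (p.1.1 - p.2) (g p.2) p.1.2) (q, s) := by
    ext q
    exact (lintegral_indicator measurableSet_Ioo _).symm
  rw [h_eq]
  refine Measurable.lintegral_prod_right' (Measurable.indicator ?_ ?_)
  · exact measurable_heatFlow (by fun_prop)
      (hg.comp (measurable_snd.prodMap measurable_id)) (by fun_prop)
  · exact (measurableSet_lt measurable_const measurable_snd).inter
      (measurableSet_lt measurable_snd (by fun_prop))

lemma heatFlow_mono (h : ∀ y, f y ≤ g y) (t : ℝ) (x : 𝔼 n) : heatFlow t f x ≤ heatFlow t g x :=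
  lintegral_mono fun y => mul_le_mul_right (h y) _

lemma heatFlow_add (hf : Measurable f) (t : ℝ) (x : 𝔼 n) :
    heatFlow t (fun y => f y + g y) x = heatFlow t f x + heatFlow t g x := by
  simp only [heatFlow, mul_add]
  exact lintegral_add_left (by fun_prop) _

lemma heatFlow_const_mul (hf : Measurable f) (c : ℝ≥0∞) (t : ℝ) (x : 𝔼 n) :
    heatFlow t (fun y => c * f y) x = c * heatFlow t f x := by
  simp only [heatFlow, mul_left_comm _ c]
  exact lintegral_const_mul c (by fun_prop)

lemma heatFlow_iSup {f : ℕ → 𝔼 n → ℝ≥0∞} (hf : ∀ k, Measurable (f k)) (hmono : Monotone f)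
    (t : ℝ) (x : 𝔼 n) : heatFlow t (fun y => ⨆ k, f k y) x = ⨆ k, heatFlow t (f k) x := by
  simp only [heatFlow, ENNReal.mul_iSup]
  exact lintegral_iSup (by fun_prop) fun i j hij y => mul_le_mul_right (hmono hij y) _

lemma heatFlow_eq_lintegral_comp_sub (t : ℝ) (f : 𝔼 n → ℝ≥0∞) (x : 𝔼 n) :
    heatFlow t f x = ∫⁻ w, ENNReal.ofReal (heatKernel n w t) * f (x - w) := by
  rw [← lintegral_sub_left_eq_self
    (fun w => ENNReal.ofReal (heatKernel n w t) * f (x - w)) x, heatFlow]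
  simp only [sub_sub_self]

lemma heatFlow_const (ht : 0 < t) (c : ℝ≥0∞) (x : 𝔼 n) : heatFlow t (fun _ => c) x = c := by
  rw [heatFlow_eq_lintegral_comp_sub, lintegral_mul_const c (by fun_prop), lintegral_heatKernel ht,
    one_mul]

lemma heatFlow_le_of_forall_le (ht : 0 < t) {c : ℝ≥0∞} (h : ∀ y, f y ≤ c) (x : 𝔼 n) :
    heatFlow t f x ≤ c :=
  (heatFlow_mono h t x).trans_eq (heatFlow_const ht c x)

lemma zygMass_heatFlow_le (ht : 0 < t) (hf : Measurable f) :
    zygMass α ρ (heatFlow t f) ≤ zygMass α ρ f := by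
  simp only [funext (heatFlow_eq_lintegral_comp_sub t f)]
  calc zygMass α ρ (fun x => ∫⁻ w, ENNReal.ofReal (heatKernel n w t) * f (x - w))
      ≤ ∫⁻ w, zygMass α ρ (fun x => ENNReal.ofReal (heatKernel n w t) * f (x - w)) :=
        zygMass_lintegral_le (by fun_prop)
    _ ≤ ∫⁻ w, ENNReal.ofReal (heatKernel n w t) * zygMass α ρ f := by
        refine lintegral_mono fun w => (zygMass_const_mul_le (by fun_prop) _).trans ?_
        gcongr
        exact zygMass_comp_sub_right_le f w
    _ = zygMass α ρ f := by
        rw [lintegral_mul_const _ (by fun_prop), lintegral_heatKernel ht, one_mul]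

lemma lintegral_setLIntegral_ball_mul {X : Type*} [PseudoMetricSpace X] [MeasurableSpace X]
    [OpensMeasurableSpace X] [SecondCountableTopology X] {μ : Measure X} [SFinite μ]
    {k f : X → ℝ≥0∞} (hk : Measurable k) (hf : Measurable f) (r : ℝ) :
    ∫⁻ y, (∫⁻ z in Metric.ball y r, k z ∂μ) * f y ∂μ =
      ∫⁻ z, k z * ∫⁻ y in Metric.ball z r, f y ∂μ ∂μ := by
  set S := {p : X × X | dist p.2 p.1 < r}
  have hS_meas : MeasurableSet S := measurableSet_lt (by fun_prop) measurable_const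
  calc ∫⁻ y, (∫⁻ z in Metric.ball y r, k z ∂μ) * f y ∂μ
      = ∫⁻ y, ∫⁻ z, S.indicator (fun p => k p.2 * f p.1) (y, z) ∂μ ∂μ := by
        refine lintegral_congr fun y => ?_
        rw [← lintegral_mul_const _ hk, ← lintegral_indicator measurableSet_ball]
        rfl
    _ = ∫⁻ z, ∫⁻ y, S.indicator (fun p => k p.2 * f p.1) (y, z) ∂μ ∂μ :=
        lintegral_lintegral_swap (Measurable.indicator (by fun_prop) hS_meas).aemeasurable
    _ = ∫⁻ z, k z * ∫⁻ y in Metric.ball z r, f y ∂μ ∂μ := by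
        refine lintegral_congr fun z => ?_
        have h_ball : Metric.ball z r = {y | dist z y < r} := Set.ext fun y => Metric.mem_ball'
        rw [← lintegral_const_mul _ hf, ← lintegral_indicator measurableSet_ball, h_ball]
        rfl

lemma volume_ball_mul_heatFlow_le (ht : 0 < t) (hf : Measurable f) (x : 𝔼 n) :
    volume (Metric.ball (0 : 𝔼 n) √t) * heatFlow t f x ≤
      ENNReal.ofReal (Real.exp (1 / 4) * 2 ^ ((n : ℝ) / 2)) * zygMass 0 √t f := by
  set B := Real.exp (1 / 4) * 2 ^ ((n : ℝ) / 2)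
  set k : 𝔼 n → ℝ≥0∞ := fun z => ENNReal.ofReal B * ENNReal.ofReal (heatKernel n (x - z) (2 * t))
    with hk
  have h_avg : ∀ y, volume (Metric.ball (0 : 𝔼 n) √t) * ENNReal.ofReal (heatKernel n (x - y) t) ≤
      ∫⁻ z in Metric.ball y √t, k z := by
    intro y
    rw [← Measure.addHaar_ball_center volume y, mul_comm, ← setLIntegral_const]
    refine setLIntegral_mono' measurableSet_ball fun z hz => ?_
    change _ ≤ ENNReal.ofReal B * _
    rw [← ENNReal.ofReal_mul (by positivity)]
    refine ENNReal.ofReal_le_ofReal (heatKernel_le_mul_heatKernel_two_mul ht ?_)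
    rw [sub_sub_sub_cancel_left y z x, ← dist_eq_norm]
    exact (Real.le_sqrt dist_nonneg ht.le).1 (Metric.mem_ball.1 hz).le
  calc volume (Metric.ball (0 : 𝔼 n) √t) * heatFlow t f x
      ≤ ∫⁻ y, (∫⁻ z in Metric.ball y √t, k z) * f y := by
        rw [heatFlow, ← lintegral_const_mul' _ _ measure_ball_lt_top.ne]
        simp only [← mul_assoc]
        exact lintegral_mono fun y => mul_le_mul_left (h_avg y) _
    _ = ∫⁻ z, k z * ∫⁻ y in Metric.ball z √t, f y :=
        lintegral_setLIntegral_ball_mul (by fun_prop) hf _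
    _ ≤ ∫⁻ z, k z * zygMass 0 √t f :=
        lintegral_mono fun z => mul_le_mul_right
          (setLIntegral_le_zygMass_zero measurableSet_ball subset_rfl) _
    _ = ENNReal.ofReal B * heatFlow (2 * t) (fun _ => zygMass 0 √t f) x := by
        rw [heatFlow, ← lintegral_const_mul' _ _ ofReal_ne_top]
        simp only [hk, mul_assoc]
    _ = ENNReal.ofReal B * zygMass 0 √t f := by rw [heatFlow_const (by positivity)]

lemma exists_heatFlow_le_zygMass (n : ℕ) : ∃ C : ℝ≥0, ∀ (f : 𝔼 n → ℝ≥0∞) (t : ℝ),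
    Measurable f → 0 < t → ∀ x, heatFlow t f x ≤
      C * ENNReal.ofReal (t ^ (-((n : ℝ) / 2))) * zygMass 0 √t f := by
  have hω := volume_real_unitBall_pos n
  set ω := volume.real (Metric.ball (0 : 𝔼 n) 1)
  refine ⟨.mk (ω⁻¹ * (Real.exp (1 / 4) * 2 ^ ((n : ℝ) / 2))) (by positivity), fun f t hf ht x => ?_⟩
  have h_inv : ENNReal.ofReal (ω⁻¹ * t ^ (-((n : ℝ) / 2))) *
      volume (Metric.ball (0 : 𝔼 n) √t) = 1 := by
    rw [volume_ball_sqrt 0 ht, ← ENNReal.ofReal_mul (by positivity), Real.rpow_neg ht.le, ← mul_inv,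
      inv_mul_cancel₀ (by positivity), ofReal_one]
  calc heatFlow t f x
      = ENNReal.ofReal (ω⁻¹ * t ^ (-((n : ℝ) / 2))) *
          (volume (Metric.ball (0 : 𝔼 n) √t) * heatFlow t f x) := by
        rw [← mul_assoc, h_inv, one_mul]
    _ ≤ ENNReal.ofReal (ω⁻¹ * t ^ (-((n : ℝ) / 2))) *
          (ENNReal.ofReal (Real.exp (1 / 4) * 2 ^ ((n : ℝ) / 2)) * zygMass 0 √t f) := by
        grw [volume_ball_mul_heatFlow_le ht hf x]
    _ = _ := by
        rw [← ENNReal.ofReal_coe_nnreal, NNReal.coe_mk, ← mul_assoc,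
          ← ENNReal.ofReal_mul (by positivity), ← ENNReal.ofReal_mul (by positivity)]
        ring_nf

lemma exists_zygMass_zero_sqrt_le {n : ℕ} (hn : 0 < n) {α : ℝ} (hα : 0 ≤ α) : ∃ K : ℝ≥0,
    ∀ (f : 𝔼 n → ℝ≥0∞) (t : ℝ), 0 < t →
      zygMass 0 √t f ≤ K * ENNReal.ofReal (logFac t ^ (-α)) * zygMass α √t f := by
  have hω := volume_real_unitBall_pos n
  obtain ⟨K, hK⟩ := exists_logFac_mul_rpow_rpow_le hω (a := (n : ℝ) / 2) (by positivity) (-α)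
  refine ⟨K, fun f t ht => zygMass_le_iff.2 fun z E hE hEz => ?_⟩
  rw [Real.rpow_zero, ofReal_one, one_mul]
  grw [setLIntegral_le_zygMass_of_measure_le hα (by positivity) hE hEz
    ((measure_mono hEz).trans_eq (volume_ball_sqrt z ht)), ofReal_le_coe_mul_ofReal (hK t ht)]

end HeatFlow

section CriticalBound

lemma rpow_one_add (x : ℝ≥0∞) {b : ℝ} (hb : 0 ≤ b) : x ^ (1 + b) = x ^ b * x := by
  rw [add_comm, ENNReal.rpow_add_of_nonneg _ _ hb one_pos.le, ENNReal.rpow_one]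

lemma setLIntegral_rpow_one_add_le {X : Type*} [MeasurableSpace X] {μ : Measure X} {b : ℝ}
    (hb : 0 ≤ b) {c : ℝ≥0∞} {f : X → ℝ≥0∞} {F : Set X} (hf_meas : Measurable f)
    (hF : MeasurableSet F) (h : ∀ x ∈ F, f x ^ b ≤ c) :
    ∫⁻ x in F, f x ^ (1 + b) ∂μ ≤ c * ∫⁻ x in F, f x ∂μ := by
  rw [← lintegral_const_mul c hf_meas]
  refine setLIntegral_mono' hF fun x hx => ?_
  rw [rpow_one_add _ hb]
  exact mul_le_mul_left (h x hx) _

/-- The size `M` of a solution at time `t` in the critical scale of order `a = n / 2`: a bound in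
the weak Zygmund class together with the pointwise decay which the heat flow of such data enjoys. -/
structure CriticalBound {X : Type*} [PseudoMetricSpace X] [MeasureSpace X] (a ρ t : ℝ) (M : ℝ≥0∞)
    (f : X → ℝ≥0∞) : Prop where
  zygMass_le : zygMass a ρ f ≤ M
  le (x : X) : f x ≤ M * ENNReal.ofReal ((t * logFac t) ^ (-a))

/-- The size `A` at time `s` of a source term in the Duhamel formula: the bounds satisfied by the
power `f ^ (1 + 1 / a)` of a function with a `CriticalBound`. -/
structure SourceBound {X : Type*} [PseudoMetricSpace X] [MeasureSpace X] (a ρ s : ℝ) (A : ℝ≥0∞)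
    (g : X → ℝ≥0∞) : Prop where
  zygMass_le : zygMass 0 ρ g ≤ A * ENNReal.ofReal (s⁻¹ * logFac s ^ (-(a + 1)))
  le (x : X) : g x ≤ A * ENNReal.ofReal ((s * logFac s) ^ (-(a + 1)))

variable {X : Type*} [PseudoMetricSpace X] [MeasureSpace X] {a γ ρ t T : ℝ} {M N : ℝ≥0∞}
  {f g : X → ℝ≥0∞}

lemma criticalBound_zero : CriticalBound a ρ t M (0 : X → ℝ≥0∞) where
  zygMass_le := zygMass_le_iff.2 fun z E _ _ => by
    simp only [Pi.zero_apply, lintegral_zero, mul_zero, zero_le]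
  le _ := zero_le

lemma CriticalBound.mono (hf : CriticalBound a ρ t M f) (h : M ≤ N) : CriticalBound a ρ t N f :=
  ⟨hf.zygMass_le.trans h, fun x => (hf.le x).trans (mul_le_mul_left h _)⟩

lemma CriticalBound.mono_fun (hg : CriticalBound a ρ t M g) (h : ∀ x, f x ≤ g x) :
    CriticalBound a ρ t M f :=
  ⟨(zygMass_mono h).trans hg.zygMass_le, fun x => (h x).trans (hg.le x)⟩

lemma CriticalBound.add (hf : CriticalBound a ρ t M f) (hg : CriticalBound a ρ t N g)
    (hf_meas : Measurable f) : CriticalBound a ρ t (M + N) (fun x => f x + g x) where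
  zygMass_le := (zygMass_add_le hf_meas).trans (add_le_add hf.zygMass_le hg.zygMass_le)
  le x := by
    rw [add_mul]
    exact add_le_add (hf.le x) (hg.le x)

lemma CriticalBound.iSup {f : ℕ → X → ℝ≥0∞} (hf : ∀ k, CriticalBound a ρ t M (f k))
    (hf_meas : ∀ k, Measurable (f k)) (hmono : Monotone f) :
    CriticalBound a ρ t M (fun x => ⨆ k, f k x) :=
  ⟨zygMass_iSup_le hf_meas hmono fun k => (hf k).zygMass_le, fun x => iSup_le fun k => (hf k).le x⟩

lemma CriticalBound.setLIntegral_le (hf : CriticalBound a ρ t M f) (ha : 0 ≤ a) {z : X} {E : Set X}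
    (hE : MeasurableSet E) (hEz : E ⊆ Metric.ball z ρ) : ∫⁻ x in E, f x ≤ M :=
  (setLIntegral_le_zygMass_zero hE hEz).trans <| (zygMass_zero_le ha).trans hf.zygMass_le

lemma CriticalBound.rpow_le (hf : CriticalBound a ρ t M f) (ht : 0 < t) {q : ℝ} (hq : 0 ≤ q)
    (x : X) : f x ^ q ≤ M ^ q * ENNReal.ofReal ((t * logFac t) ^ (-(a * q))) := by
  have hL := logFac_pos ht.le
  grw [hf.le x, ENNReal.mul_rpow_of_nonneg _ _ hq, ofReal_rpow_of_pos (by positivity),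
    ← Real.rpow_mul (by positivity), neg_mul]

lemma CriticalBound.rpow_one_add_inv_le (hf : CriticalBound a ρ t M f) (ha : 0 < a) (ht : 0 < t)
    (x : X) :
    f x ^ (1 + a⁻¹) ≤ M ^ (1 + a⁻¹) * ENNReal.ofReal ((t * logFac t) ^ (-(a + 1))) := by
  have h_exp : a * (1 + a⁻¹) = a + 1 := by
    rw [mul_add, mul_one, mul_inv_cancel₀ ha.ne']
  simpa only [h_exp] using hf.rpow_le ht (q := 1 + a⁻¹) (by positivity) x

lemma CriticalBound.volume_inter_lt_le (hf : CriticalBound a ρ t M f) (ha : 0 ≤ a) (ht : 0 < t)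
    (hf_meas : Measurable f) (b : ℝ) {z : X} {E : Set X} (hE : MeasurableSet E)
    (hEz : E ⊆ Metric.ball z ρ) :
    volume (E ∩ {x | M * ENNReal.ofReal (t ^ (-b)) < f x}) ≤ ENNReal.ofReal (t ^ b) := by
  set F := E ∩ {x | M * ENNReal.ofReal (t ^ (-b)) < f x} with hF
  rcases F.eq_empty_or_nonempty with h_empty | ⟨x, hx⟩
  · rw [h_empty, measure_empty]
    exact zero_le
  have hM0 : M ≠ 0 := by
    rintro rfl
    simpa only [zero_mul, not_lt_zero] using hx.2.trans_le (hf.le x)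
  have hMtop : M ≠ ⊤ := by
    rintro rfl
    rw [hF, top_mul (by simpa using Real.rpow_pos_of_pos ht _)] at hx
    exact not_top_lt (mem_ofPred_eq ▸ hx.2)
  have hF_meas : MeasurableSet F := hE.inter (measurableSet_lt measurable_const hf_meas)
  have h_markov : M * (ENNReal.ofReal (t ^ (-b)) * volume F) ≤ M * 1 := by
    rw [← mul_assoc, ← setLIntegral_const, mul_one]
    exact (setLIntegral_mono' hF_meas fun y hy => hy.2.le).trans
      (hf.setLIntegral_le ha hF_meas (inter_subset_left.trans hEz))
  rwa [ENNReal.mul_le_mul_iff_right hM0 hMtop, mul_comm, Real.rpow_neg ht.le,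
    ofReal_inv_of_pos (by positivity), ← div_eq_mul_inv, ENNReal.div_le_iff, one_mul] at h_markov
  all_goals simp [Real.rpow_pos_of_pos ht]

lemma CriticalBound.setLIntegral_inter_le_rpow_le (hf : CriticalBound a ρ t M f) (ha : 0 < a)
    (ht : 0 < t) (hf_meas : Measurable f) {z : X} {E : Set X} (hE : MeasurableSet E)
    (hEz : E ⊆ Metric.ball z ρ) :
    ∫⁻ x in E ∩ {x | f x ≤ M * ENNReal.ofReal (t ^ (-(a / 2)))}, f x ^ (1 + a⁻¹) ≤
      M ^ (1 + a⁻¹) * ENNReal.ofReal (t ^ (-(1 / 2 : ℝ))) := by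
  have h_meas : MeasurableSet (E ∩ {x | f x ≤ M * ENNReal.ofReal (t ^ (-(a / 2)))}) :=
    hE.inter (measurableSet_le hf_meas measurable_const)
  have h_exp : -(a / 2) * a⁻¹ = -(1 / 2) := by
    field_simp
  grw [setLIntegral_rpow_one_add_le (c := M ^ a⁻¹ * ENNReal.ofReal (t ^ (-(1 / 2 : ℝ))))
    (by positivity) hf_meas h_meas fun x hx => ?_,
    hf.setLIntegral_le ha.le h_meas (inter_subset_left.trans hEz), rpow_one_add _ (by positivity),
    mul_right_comm]
  have hx_le : f x ≤ M * ENNReal.ofReal (t ^ (-(a / 2))) := hx.2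
  grw [hx_le, ENNReal.mul_rpow_of_nonneg _ _ (by positivity), ofReal_rpow_of_pos (by positivity),
    ← Real.rpow_mul ht.le, h_exp]

lemma CriticalBound.setLIntegral_inter_lt_rpow_le (hf : CriticalBound a ρ t M f) (ha : 0 < a)
    (ht : 0 < t) (hf_meas : Measurable f) {z : X} {E : Set X} (hE : MeasurableSet E)
    (hEz : E ⊆ Metric.ball z ρ) :
    ∫⁻ x in E ∩ {x | M * ENNReal.ofReal (t ^ (-(a / 2))) < f x}, f x ^ (1 + a⁻¹) ≤
      M ^ (1 + a⁻¹) * ENNReal.ofReal ((t * logFac t)⁻¹ * logFac (t ^ (a / 2)) ^ (-a)) := by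
  have h_meas : MeasurableSet (E ∩ {x | M * ENNReal.ofReal (t ^ (-(a / 2))) < f x}) :=
    hE.inter (measurableSet_lt measurable_const hf_meas)
  have hL := logFac_pos ht.le
  grw [setLIntegral_rpow_one_add_le (c := M ^ a⁻¹ * ENNReal.ofReal (t * logFac t)⁻¹)
    (by positivity) hf_meas h_meas fun x _ => ?_,
    setLIntegral_le_zygMass_of_measure_le ha.le (by positivity) h_meas
      (inter_subset_left.trans hEz) (hf.volume_inter_lt_le ha.le ht hf_meas _ hE hEz),
    hf.zygMass_le, rpow_one_add _ (by positivity), ENNReal.ofReal_mul (by positivity)]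
  · ring_nf
    rfl
  · grw [hf.rpow_le ht (by positivity) x, mul_inv_cancel₀ ha.ne', Real.rpow_neg_one]

lemma CriticalBound.exists_zygMass_zero_rpow_le (ha : 0 < a) (hT : 0 < T) : ∃ C : ℝ≥0,
    ∀ (ρ t : ℝ) (M : ℝ≥0∞) (f : X → ℝ≥0∞), 0 < t → t ≤ T → Measurable f →
      CriticalBound a ρ t M f → zygMass 0 ρ (fun x => f x ^ (1 + a⁻¹)) ≤
        M ^ (1 + a⁻¹) * (C * ENNReal.ofReal (t⁻¹ * logFac t ^ (-(a + 1)))) := by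
  obtain ⟨C, hC⟩ := exists_rpow_mul_logFac_rpow_le (b := 1 / 2) (m := a + 1) (by norm_num)
    (by positivity)
  obtain ⟨K, hK⟩ := exists_logFac_mul_rpow_rpow_le one_pos (half_pos ha) (-a)
  have hLT := logFac_pos hT.le
  refine ⟨C * .mk (T ^ (1 / 2 : ℝ) * logFac T ^ (a + 1)) (by positivity) + K,
    fun ρ t M f ht htT hf_meas hf => zygMass_le_iff.2 fun z E hE hEz => ?_⟩
  have hL := logFac_pos ht.le
  have h_split : E \ {x | f x ≤ M * ENNReal.ofReal (t ^ (-(a / 2)))} =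
      E ∩ {x | M * ENNReal.ofReal (t ^ (-(a / 2))) < f x} := by
    ext x
    simp only [Set.mem_sdiff, mem_inter_iff, mem_ofPred_eq, not_le]
  have h_low : t ^ (-(1 / 2 : ℝ)) ≤ (C * .mk (T ^ (1 / 2 : ℝ) * logFac T ^ (a + 1))
      (by positivity) : ℝ≥0) * (t⁻¹ * logFac t ^ (-(a + 1))) := by
    have h_eq : t ^ (-(1 / 2 : ℝ)) =
        t ^ (1 / 2 : ℝ) * logFac t ^ (a + 1) * (t⁻¹ * logFac t ^ (-(a + 1))) := by
      rw [mul_mul_mul_comm, ← Real.rpow_add hL, add_neg_cancel, Real.rpow_zero, mul_one,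
        ← Real.rpow_neg_one, ← Real.rpow_add ht]
      norm_num
    grw [h_eq, hC t T ht htT, NNReal.coe_mul, NNReal.coe_mk]
  have h_high : (t * logFac t)⁻¹ * logFac (t ^ (a / 2)) ^ (-a) ≤
      K * (t⁻¹ * logFac t ^ (-(a + 1))) := by
    have h := hK t ht
    rw [one_mul] at h
    grw [h, neg_add, Real.rpow_add hL, Real.rpow_neg_one, mul_inv]
    exact le_of_eq (by ring)
  rw [Real.rpow_zero, ofReal_one, one_mul, ← lintegral_inter_add_sdiff _ E
    (measurableSet_le hf_meas measurable_const), h_split, ENNReal.coe_add, add_mul, mul_add]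
  grw [hf.setLIntegral_inter_le_rpow_le ha ht hf_meas hE hEz,
    hf.setLIntegral_inter_lt_rpow_le ha ht hf_meas hE hEz, ofReal_le_coe_mul_ofReal h_low,
    ofReal_le_coe_mul_ofReal h_high]

lemma exists_logFac_rpow_mul_le_of_le_rpow (ha : 0 < a) (hγ : 0 ≤ γ) : ∃ C : ℝ≥0,
    ∀ t σ, 0 < t → 0 < σ → σ ≤ t ^ a →
      logFac σ ^ γ * ((t * logFac t) ^ (-(a + 1)) * σ) ≤
        C * (t⁻¹ * logFac t ^ (γ - (a + 1))) := by
  obtain ⟨C, hC⟩ := exists_rpow_mul_logFac_rpow_le one_pos hγ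
  obtain ⟨K, hK⟩ := exists_logFac_mul_rpow_rpow_le one_pos ha γ
  refine ⟨C * K, fun t σ ht hσ h => ?_⟩
  have hL := logFac_pos ht.le
  have h_weight := hC _ _ hσ h
  have hKt := hK t ht
  rw [Real.rpow_one, Real.rpow_one] at h_weight
  rw [one_mul] at hKt
  have h_time : t⁻¹ = t ^ (-(a + 1)) * t ^ a := by
    rw [← Real.rpow_add ht, ← Real.rpow_neg_one]
    ring_nf
  calc logFac σ ^ γ * ((t * logFac t) ^ (-(a + 1)) * σ)
      = (t * logFac t) ^ (-(a + 1)) * (σ * logFac σ ^ γ) := by ring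
    _ ≤ (t * logFac t) ^ (-(a + 1)) * (C * (t ^ a * (K * logFac t ^ γ))) := by
      grw [h_weight, hKt]
    _ = _ := by
      rw [Real.mul_rpow ht.le hL.le, sub_eq_add_neg, Real.rpow_add hL, h_time, NNReal.coe_mul]
      ring

lemma CriticalBound.exists_zygMass_rpow_le [ProperSpace X]
    [IsFiniteMeasureOnCompacts (volume : Measure X)] (ha : 0 < a) (hγ : 0 ≤ γ) (hT : 0 < T) :
    ∃ C : ℝ≥0, ∀ (ρ t : ℝ) (M : ℝ≥0∞) (f : X → ℝ≥0∞), 0 < t → t ≤ T → Measurable f →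
      CriticalBound a ρ t M f → zygMass γ ρ (fun x => f x ^ (1 + a⁻¹)) ≤
        M ^ (1 + a⁻¹) * (C * ENNReal.ofReal (t⁻¹ * logFac t ^ (γ - (a + 1)))) := by
  obtain ⟨C₁, hC₁⟩ := CriticalBound.exists_zygMass_zero_rpow_le (X := X) ha hT
  obtain ⟨C₂, hC₂⟩ := exists_logFac_rpow_mul_le_of_le_rpow ha hγ
  obtain ⟨K, hK⟩ := exists_logFac_mul_rpow_rpow_le one_pos ha γ
  refine ⟨C₁ * K + C₂, fun ρ t M f ht htT hf_meas hf => zygMass_le_iff.2 fun z E hE hEz => ?_⟩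
  have hL := logFac_pos ht.le
  have h_top : volume E ≠ ⊤ := ((measure_mono hEz).trans_lt measure_ball_lt_top).ne
  rcases eq_or_ne (volume E) 0 with h0 | h0
  · rw [setLIntegral_measure_zero E _ h0, mul_zero]
    exact zero_le
  have hσ : 0 < volume.real E := toReal_pos h0 h_top
  rcases le_total (t ^ a) (volume.real E) with h | h
  · have h_weight : logFac (volume.real E) ^ γ ≤ K * logFac t ^ γ := by
      refine le_trans ?_ ((hK t ht).trans_eq' (by rw [one_mul]))
      grw [antitoneOn_logFac (Real.rpow_pos_of_pos ht a) hσ h]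
      exact (logFac_pos hσ.le).le
    grw [setLIntegral_le_zygMass_zero hE hEz, hC₁ ρ t M f ht htT hf_meas hf,
      ofReal_le_coe_mul_ofReal h_weight, sub_eq_add_neg, Real.rpow_add hL, mul_left_comm t⁻¹,
      ENNReal.ofReal_mul (Real.rpow_nonneg hL.le _), ENNReal.coe_add, ENNReal.coe_mul,
      ← le_self_add (a := (C₁ * K : ℝ≥0∞))]
    exact le_of_eq (by ring)
  · have h_int : ∫⁻ x in E, f x ^ (1 + a⁻¹) ≤ M ^ (1 + a⁻¹) *
        ENNReal.ofReal ((t * logFac t) ^ (-(a + 1))) * ENNReal.ofReal (volume.real E) := by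
      rw [ofReal_measureReal h_top, ← setLIntegral_const]
      exact setLIntegral_mono' hE fun x _ => hf.rpow_one_add_inv_le ha ht x
    grw [h_int, mul_assoc, ← ENNReal.ofReal_mul (by positivity), mul_left_comm,
      ← ENNReal.ofReal_mul (Real.rpow_nonneg (logFac_pos hσ.le).le _),
      ofReal_le_coe_mul_ofReal (hC₂ t _ ht hσ h), ENNReal.coe_add,
      ← le_add_self (a := (C₂ : ℝ≥0∞))]

lemma CriticalBound.exists_sourceBound_rpow (ha : 0 < a) (hT : 0 < T) : ∃ C : ℝ≥0,
    ∀ (ρ t : ℝ) (M : ℝ≥0∞) (f : X → ℝ≥0∞), 0 < t → t ≤ T → Measurable f →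
      CriticalBound a ρ t M f →
        SourceBound a ρ t (C * M ^ (1 + a⁻¹)) (fun x => f x ^ (1 + a⁻¹)) := by
  obtain ⟨C, hC⟩ := CriticalBound.exists_zygMass_zero_rpow_le (X := X) ha hT
  refine ⟨C + 1, fun ρ t M f ht htT hf_meas hf => ⟨?_, fun x => ?_⟩⟩
  · grw [hC ρ t M f ht htT hf_meas hf, mul_left_comm, mul_assoc, ENNReal.coe_add,
      ← le_self_add (a := (C : ℝ≥0∞))]
  · grw [hf.rpow_one_add_inv_le ha ht x, ENNReal.coe_add, ENNReal.coe_one, add_mul, one_mul,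
      ← le_add_self (a := M ^ (1 + a⁻¹))]

end CriticalBound

section HeatFlowBounds

variable {n : ℕ} {a ρ s t τ T : ℝ} {A : ℝ≥0∞}

lemma exists_criticalBound_heatFlow (hn : 0 < n) : ∃ C : ℝ≥0,
    ∀ (f : 𝔼 n → ℝ≥0∞) (T t : ℝ), Measurable f → 0 < t → t ≤ T →
      CriticalBound ((n : ℝ) / 2) √T t (C * zygMass ((n : ℝ) / 2) √T f) (heatFlow t f) := by
  obtain ⟨C, hC⟩ := exists_heatFlow_le_zygMass n
  obtain ⟨K, hK⟩ := exists_zygMass_zero_sqrt_le hn (α := (n : ℝ) / 2) (by positivity)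
  refine ⟨1 + C * K, fun f T t hf ht htT => ⟨?_, fun x => ?_⟩⟩
  · grw [zygMass_heatFlow_le ht hf, ENNReal.coe_add, ← le_self_add (a := ((1 : ℝ≥0) : ℝ≥0∞)),
      ENNReal.coe_one, one_mul]
  · grw [hC f t hf ht x, hK f t ht, zygMass_mono_radius (Real.sqrt_le_sqrt htT), ENNReal.coe_add,
      ← le_add_self (a := ((C * K : ℝ≥0) : ℝ≥0∞)), Real.mul_rpow ht.le (logFac_pos ht.le).le,
      ENNReal.ofReal_mul (by positivity), ENNReal.coe_mul]
    exact le_of_eq (by ring)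

lemma SourceBound.setLIntegral_heatFlow_le {g : 𝔼 n → ℝ≥0∞} (hg : SourceBound a ρ s A g)
    (hg_meas : Measurable g) (hτ : 0 < τ) {z : 𝔼 n} {E : Set (𝔼 n)} (hE : MeasurableSet E)
    (hEz : E ⊆ Metric.ball z ρ) :
    ∫⁻ x in E, heatFlow τ g x ≤ A * min (ENNReal.ofReal (s⁻¹ * logFac s ^ (-(a + 1))))
      (volume E * ENNReal.ofReal ((s * logFac s) ^ (-(a + 1)))) := by
  rw [mul_min]
  refine le_min ?_ ?_
  · exact (setLIntegral_le_zygMass_zero hE hEz).trans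
      ((zygMass_heatFlow_le hτ hg_meas).trans hg.zygMass_le)
  · rw [mul_left_comm, mul_comm, ← setLIntegral_const]
    exact lintegral_mono fun x => heatFlow_le_of_forall_le hτ hg.le x

lemma exists_zygMass_duhamel_le (n : ℕ) (ha : 0 < a) (hT : 0 < T) : ∃ C : ℝ≥0,
    ∀ (g : ℝ → 𝔼 n → ℝ≥0∞) (A : ℝ≥0∞) (ρ t : ℝ), Measurable (Function.uncurry g) → t ≤ T →
      (∀ s, 0 < s → s < t → SourceBound a ρ s A (g s)) →
        zygMass a ρ (duhamel g t) ≤ C * A := by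
  obtain ⟨C, hC⟩ := exists_lintegral_min_le ha hT
  refine ⟨C, fun g A ρ t hg htT hbound => zygMass_le_iff.2 fun z E hE hEz => ?_⟩
  rcases eq_or_ne (volume E) 0 with h0 | h0
  · rw [setLIntegral_measure_zero E _ h0, mul_zero]
    exact zero_le
  have h_top : volume E ≠ ⊤ := ((measure_mono hEz).trans_lt measure_ball_lt_top).ne
  have hσ : 0 < volume.real E := toReal_pos h0 h_top
  have hL := logFac_pos hσ.le
  have h_int : ∫⁻ x in E, duhamel g t x ≤
      A * (C * ENNReal.ofReal (logFac (volume.real E) ^ (-a))) :=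
    calc ∫⁻ x in E, duhamel g t x
        = ∫⁻ s in Ioo 0 t, ∫⁻ x in E, heatFlow (t - s) (g s) x :=
          lintegral_lintegral_swap (Measurable.aemeasurable
            (measurable_heatFlow (by fun_prop) (by fun_prop) (by fun_prop)))
      _ ≤ ∫⁻ s in Ioo 0 t, A * min (ENNReal.ofReal (s⁻¹ * logFac s ^ (-(a + 1))))
            (ENNReal.ofReal (volume.real E) * ENNReal.ofReal ((s * logFac s) ^ (-(a + 1)))) := by
          rw [ofReal_measureReal h_top]
          exact setLIntegral_mono' measurableSet_Ioo fun s hs =>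
            (hbound s hs.1 hs.2).setLIntegral_heatFlow_le (by fun_prop) (sub_pos.2 hs.2) hE hEz
      _ ≤ ∫⁻ s in Ioc 0 T, A * min (ENNReal.ofReal (s⁻¹ * logFac s ^ (-(a + 1))))
            (ENNReal.ofReal (volume.real E) * ENNReal.ofReal ((s * logFac s) ^ (-(a + 1)))) :=
          lintegral_mono_set fun s hs => ⟨hs.1, hs.2.le.trans htT⟩
      _ = A * ∫⁻ s in Ioc 0 T, min (ENNReal.ofReal (s⁻¹ * logFac s ^ (-(a + 1))))
            (ENNReal.ofReal (volume.real E) * ENNReal.ofReal ((s * logFac s) ^ (-(a + 1)))) :=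
          lintegral_const_mul _ (by have := measurable_logFac; fun_prop)
      _ ≤ _ := by grw [hC _ hσ]
  grw [h_int, mul_left_comm, mul_left_comm (ENNReal.ofReal _) (C : ℝ≥0∞),
    ← ENNReal.ofReal_mul (by positivity), ← Real.rpow_add hL, add_neg_cancel, Real.rpow_zero,
    ofReal_one, mul_one, mul_comm]

lemma half_rpow_neg (a : ℝ) (ht : 0 ≤ t) : (t / 2) ^ (-a) = 2 ^ a * t ^ (-a) := by
  rw [Real.div_rpow ht two_pos.le, Real.rpow_neg two_pos.le, div_inv_eq_mul, mul_comm]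

lemma exists_setLIntegral_heatFlow_near_le (hn : 0 < n) (hT : 0 < T) : ∃ C : ℝ≥0,
    ∀ (g : ℝ → 𝔼 n → ℝ≥0∞) (A : ℝ≥0∞) (ρ t : ℝ), Measurable (Function.uncurry g) → 0 < t → t ≤ T →
      √t ≤ ρ → (∀ s, 0 < s → s < t → SourceBound ((n : ℝ) / 2) ρ s A (g s)) → ∀ x,
        ∫⁻ s in Ioc 0 (t / 2), heatFlow (t - s) (g s) x ≤
          C * A * ENNReal.ofReal ((t * logFac t) ^ (-((n : ℝ) / 2))) := by
  set a := (n : ℝ) / 2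
  have ha : 0 < a := by positivity
  obtain ⟨C₁, hC₁⟩ := exists_heatFlow_le_zygMass n
  obtain ⟨C₂, hC₂⟩ := exists_lintegral_Ioc_inv_mul_logFac_rpow_le ha hT
  refine ⟨C₁ * C₂ * .mk (2 ^ a) (by positivity), fun g A ρ t hg ht htT hρ hbound x => ?_⟩
  have hL := logFac_pos ht.le
  have h_pt : ∀ s ∈ Ioc 0 (t / 2), heatFlow (t - s) (g s) x ≤
      C₁ * ENNReal.ofReal ((t / 2) ^ (-a)) * A *
        ENNReal.ofReal (s⁻¹ * logFac s ^ (-(a + 1))) := fun s ⟨hs, hst⟩ => by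
    have h_le : t / 2 ≤ t - s := by linarith
    have h_radius : √(t - s) ≤ ρ := (Real.sqrt_le_sqrt (by linarith)).trans hρ
    grw [hC₁ (g s) (t - s) (by fun_prop) (by linarith) x, zygMass_mono_radius h_radius,
      (hbound s hs (by linarith)).zygMass_le, mul_assoc _ A,
      Real.rpow_le_rpow_of_nonpos (half_pos ht) h_le (neg_nonpos.2 ha.le)]
  have h_log : logFac (t / 2) ^ (-a) ≤ logFac t ^ (-a) :=
    logFac_rpow_le_rpow_of_le (neg_nonpos.2 ha.le) (half_pos ht) (half_le_self ht.le)
  calc ∫⁻ s in Ioc 0 (t / 2), heatFlow (t - s) (g s) x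
      ≤ C₁ * ENNReal.ofReal ((t / 2) ^ (-a)) * A *
          (C₂ * ENNReal.ofReal (logFac (t / 2) ^ (-a))) := by
        grw [← hC₂ (t / 2) (half_pos ht) ((half_le_self ht.le).trans htT),
          ← lintegral_const_mul _ (by have := measurable_logFac; fun_prop)]
        exact setLIntegral_mono' measurableSet_Ioc h_pt
    _ ≤ C₁ * ENNReal.ofReal (2 ^ a * t ^ (-a)) * A * (C₂ * ENNReal.ofReal (logFac t ^ (-a))) := by
        grw [h_log, half_rpow_neg a ht.le]
    _ = _ := by
        rw [Real.mul_rpow ht.le hL.le, ENNReal.ofReal_mul (by positivity),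
          ENNReal.ofReal_mul (by positivity), ENNReal.coe_mul, ENNReal.coe_mul,
          ← ENNReal.ofReal_coe_nnreal (p := .mk (2 ^ a) _), NNReal.coe_mk]
        ring

lemma half_mul_logFac_rpow_mul_half_le (a : ℝ) (ht : 0 < t) :
    (t / 2 * logFac t) ^ (-(a + 1)) * (t / 2) ≤ 2 ^ a * (t * logFac t) ^ (-a) := by
  have hL := logFac_pos ht.le
  have h_exp : -(a + 1) ≤ -a := by linarith
  calc (t / 2 * logFac t) ^ (-(a + 1)) * (t / 2)
      = (t / 2) ^ (-a) * logFac t ^ (-(a + 1)) := by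
        rw [Real.mul_rpow (by positivity) hL.le, mul_right_comm,
          ← Real.rpow_add_one (half_pos ht).ne', neg_add, neg_add_cancel_right]
    _ ≤ 2 ^ a * t ^ (-a) * logFac t ^ (-a) := by
        grw [half_rpow_neg a ht.le, Real.rpow_le_rpow_of_exponent_le (one_le_logFac ht.le) h_exp]
    _ = 2 ^ a * (t * logFac t) ^ (-a) := by
        rw [Real.mul_rpow ht.le hL.le, mul_assoc]

lemma setLIntegral_heatFlow_far_le (ha : 0 ≤ a) (ht : 0 < t) {g : ℝ → 𝔼 n → ℝ≥0∞}
    (hbound : ∀ s, 0 < s → s < t → SourceBound a ρ s A (g s)) (x : 𝔼 n) :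
    ∫⁻ s in Ioo (t / 2) t, heatFlow (t - s) (g s) x ≤
      ENNReal.ofReal (2 ^ a) * A * ENNReal.ofReal ((t * logFac t) ^ (-a)) := by
  have hL := logFac_pos ht.le
  have h_pt : ∀ s ∈ Ioo (t / 2) t, heatFlow (t - s) (g s) x ≤
      A * ENNReal.ofReal ((t / 2 * logFac t) ^ (-(a + 1))) := fun s ⟨hts, hst⟩ => by
    have hs : 0 < s := (half_pos ht).trans hts
    refine heatFlow_le_of_forall_le (sub_pos.2 hst) (fun y => ((hbound s hs hst).le y).trans ?_) x
    have h_base : t / 2 * logFac t ≤ s * logFac s := by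
      grw [antitoneOn_logFac hs ht hst.le, hts]
      exact (logFac_pos hs.le).le
    grw [Real.rpow_le_rpow_of_nonpos (by positivity) h_base (by linarith)]
  calc ∫⁻ s in Ioo (t / 2) t, heatFlow (t - s) (g s) x
      ≤ A * ENNReal.ofReal ((t / 2 * logFac t) ^ (-(a + 1))) * ENNReal.ofReal (t - t / 2) := by
        rw [← Real.volume_Ioo, ← setLIntegral_const]
        exact setLIntegral_mono' measurableSet_Ioo h_pt
    _ ≤ A * ENNReal.ofReal (2 ^ a * (t * logFac t) ^ (-a)) := by
        grw [mul_assoc, ← ENNReal.ofReal_mul (by positivity), _root_.sub_half,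
          half_mul_logFac_rpow_mul_half_le a ht]
    _ = _ := by
        rw [ENNReal.ofReal_mul (by positivity)]
        ring

lemma exists_criticalBound_duhamel (hn : 0 < n) (hT : 0 < T) : ∃ C : ℝ≥0,
    ∀ (g : ℝ → 𝔼 n → ℝ≥0∞) (A : ℝ≥0∞) (ρ t : ℝ), Measurable (Function.uncurry g) → 0 < t → t ≤ T →
      √t ≤ ρ → (∀ s, 0 < s → s < t → SourceBound ((n : ℝ) / 2) ρ s A (g s)) →
        CriticalBound ((n : ℝ) / 2) ρ t (C * A) (duhamel g t) := by
  have ha : 0 < (n : ℝ) / 2 := by positivity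
  obtain ⟨C₁, hC₁⟩ := exists_zygMass_duhamel_le n ha hT
  obtain ⟨C₂, hC₂⟩ := exists_setLIntegral_heatFlow_near_le hn hT
  refine ⟨C₁ + (C₂ + .mk (2 ^ ((n : ℝ) / 2)) (by positivity)),
    fun g A ρ t hg ht htT hρ hbound => ⟨?_, fun x => ?_⟩⟩
  · grw [hC₁ g A ρ t hg htT hbound, ENNReal.coe_add, ← le_self_add (a := (C₁ : ℝ≥0∞))]
  · rw [duhamel, ← Ioc_union_Ioo_eq_Ioo (half_pos ht).le (half_lt_self ht)]
    grw [lintegral_union_le, hC₂ g A ρ t hg ht htT hρ hbound x,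
      setLIntegral_heatFlow_far_le ha.le ht hbound x, ENNReal.coe_add,
      ← le_add_self (a := ((C₂ + _ : ℝ≥0) : ℝ≥0∞)), ENNReal.coe_add, add_mul, add_mul,
      ← ENNReal.ofReal_coe_nnreal (p := .mk (2 ^ ((n : ℝ) / 2)) _), NNReal.coe_mk]

end HeatFlowBounds

section Picard

variable {n : ℕ} {t T : ℝ}

lemma duhamel_mono {f g : ℝ → 𝔼 n → ℝ≥0∞} (h : ∀ s, 0 < s → s < t → ∀ y, f s y ≤ g s y) (x : 𝔼 n) :
    duhamel f t x ≤ duhamel g t x :=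
  setLIntegral_mono' measurableSet_Ioo fun s hs => heatFlow_mono (h s hs.1 hs.2) _ x

lemma duhamel_const_mul {f : ℝ → 𝔼 n → ℝ≥0∞} (hf : Measurable (Function.uncurry f)) (c : ℝ≥0∞)
    (t : ℝ) (x : 𝔼 n) : duhamel (fun s y => c * f s y) t x = c * duhamel f t x := by
  simp only [duhamel, heatFlow_const_mul hf.of_uncurry_left]
  exact lintegral_const_mul c (by fun_prop)

lemma duhamel_iSup {f : ℕ → ℝ → 𝔼 n → ℝ≥0∞} (hf : ∀ k, Measurable (Function.uncurry (f k)))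
    (hmono : Monotone f) (t : ℝ) (x : 𝔼 n) :
    duhamel (fun s y => ⨆ k, f k s y) t x = ⨆ k, duhamel (f k) t x := by
  simp only [duhamel, heatFlow_iSup (fun k => (hf k).of_uncurry_left) fun _ _ hij => hmono hij _]
  exact lintegral_iSup (fun k => by have := hf k; fun_prop)
    fun i j hij s => heatFlow_mono (hmono hij s) _ x

/-- The right-hand side of the Duhamel formula with linear part `h` and nonlinearity `G`, as an
operator on functions of time and space. -/
noncomputable def duhamelMap (h : ℝ → 𝔼 n → ℝ≥0∞) (G : ℝ → 𝔼 n → ℝ≥0∞ → ℝ≥0∞)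
    (v : ℝ → 𝔼 n → ℝ≥0∞) : ℝ → 𝔼 n → ℝ≥0∞ :=
  fun t x => h t x + duhamel (fun s y => G s y (v s y)) t x

/-- The supremum of the Picard iterates of `duhamelMap h G` started at zero; for a monotone
nonlinearity it is the minimal solution of the Duhamel formula. -/
noncomputable def picardLimit (h : ℝ → 𝔼 n → ℝ≥0∞) (G : ℝ → 𝔼 n → ℝ≥0∞ → ℝ≥0∞) :
    ℝ → 𝔼 n → ℝ≥0∞ :=
  fun t x => ⨆ k, (duhamelMap h G)^[k] 0 t x

variable {h : ℝ → 𝔼 n → ℝ≥0∞} {G : ℝ → 𝔼 n → ℝ≥0∞ → ℝ≥0∞}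

lemma duhamelMap_mono {v w : ℝ → 𝔼 n → ℝ≥0∞} (hG : ∀ s y, Monotone (G s y))
    (hvw : ∀ s, 0 < s → s < t → ∀ y, v s y ≤ w s y) (x : 𝔼 n) :
    duhamelMap h G v t x ≤ duhamelMap h G w t x :=
  add_le_add_right (duhamel_mono (fun s hs hst y => hG s y (hvw s hs hst y)) x) _

lemma monotone_iterate_duhamelMap (hG : ∀ s y, Monotone (G s y)) :
    Monotone fun k => (duhamelMap h G)^[k] 0 :=
  Monotone.monotone_iterate_of_le_map (fun _ _ hvw _ => duhamelMap_mono hG fun s _ _ => hvw s)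
    fun _ _ => zero_le

lemma measurable_iterate_duhamelMap (hh : Measurable (Function.uncurry h))
    (hG : Measurable fun q : ℝ × 𝔼 n × ℝ≥0∞ => G q.1 q.2.1 q.2.2) (k : ℕ) :
    Measurable (Function.uncurry ((duhamelMap h G)^[k] 0)) := by
  induction k with
  | zero => exact measurable_const
  | succ k ih =>
    rw [Function.iterate_succ_apply']
    exact hh.add <| measurable_duhamel <|
      hG.comp (measurable_fst.prodMk (measurable_snd.prodMk ih))

lemma measurable_picardLimit (hh : Measurable (Function.uncurry h))
    (hG : Measurable fun q : ℝ × 𝔼 n × ℝ≥0∞ => G q.1 q.2.1 q.2.2) :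
    Measurable (Function.uncurry (picardLimit h G)) :=
  Measurable.iSup (measurable_iterate_duhamelMap hh hG)

lemma picardLimit_eq (hh : Measurable (Function.uncurry h))
    (hG : Measurable fun q : ℝ × 𝔼 n × ℝ≥0∞ => G q.1 q.2.1 q.2.2)
    (hG_mono : ∀ s y, Monotone (G s y))
    (hG_cont : ∀ s, 0 < s → s < t → ∀ y, Continuous (G s y)) (x : 𝔼 n) :
    picardLimit h G t x = duhamelMap h G (picardLimit h G) t x := by
  have h_mono := monotone_iterate_duhamelMap (h := h) hG_mono
  have h_iter_meas := measurable_iterate_duhamelMap hh hG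
  set v := fun k => (duhamelMap h G)^[k] 0
  have h_comp_meas (k : ℕ) : Measurable (Function.uncurry fun s y => G s y (v k s y)) :=
    hG.comp (measurable_fst.prodMk (measurable_snd.prodMk (h_iter_meas k)))
  calc picardLimit h G t x
      = ⨆ k, v (k + 1) t x := (Monotone.iSup_nat_add (fun i j hij => h_mono hij t x) 1).symm
    _ = h t x + ⨆ k, duhamel (fun s y => G s y (v k s y)) t x := by
        simp only [v, Function.iterate_succ_apply', duhamelMap, ENNReal.add_iSup]
    _ = h t x + duhamel (fun s y => ⨆ k, G s y (v k s y)) t x := by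
        rw [duhamel_iSup h_comp_meas fun i j hij s y => hG_mono s y (h_mono hij s y)]
    _ = duhamelMap h G (picardLimit h G) t x := by
        refine congrArg (h t x + ·) (setLIntegral_congr_fun measurableSet_Ioo fun s hs => ?_)
        have h_comm (y : 𝔼 n) : G s y (⨆ k, v k s y) = ⨆ k, G s y (v k s y) :=
          (hG_mono s y).map_ciSup_of_continuousAt (hG_cont s hs.1 hs.2 y).continuousAt
            (OrderTop.bddAbove _)
        exact congrArg (heatFlow (t - s) · x) (funext fun y => (h_comm y).symm)

lemma picardLimit_le {V : ℝ → 𝔼 n → ℝ≥0∞} (hG : ∀ s y, Monotone (G s y))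
    (hV : ∀ t, 0 < t → t < T → ∀ x, duhamelMap h G V t x ≤ V t x) (ht : 0 < t) (htT : t < T)
    (x : 𝔼 n) : picardLimit h G t x ≤ V t x := by
  refine iSup_le fun k => ?_
  induction k generalizing t x with
  | zero => exact zero_le
  | succ k ih =>
    rw [Function.iterate_succ_apply']
    exact (duhamelMap_mono hG (fun s hs hst => ih hs (hst.trans htT)) x).trans (hV t ht htT x)

end Picard

section Majorant

variable {n : ℕ}

lemma exists_mul_add_mul_rpow_one_add_le (C₁ C₂ : ℝ≥0) {b : ℝ} (hb : 0 < b) :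
    ∃ ε : ℝ≥0, 0 < ε ∧ ∀ N : ℝ≥0∞, N ≤ ε →
      C₁ * N + C₂ * (2 * C₁ * N) ^ (1 + b) ≤ 2 * C₁ * N := by
  refine ⟨(2 * C₁ + 1)⁻¹ * (2 * C₂ + 1)⁻¹ ^ b⁻¹, by positivity, fun N hN => ?_⟩
  have h_base : 2 * C₁ * ((2 * C₁ + 1)⁻¹ * (2 * C₂ + 1)⁻¹ ^ b⁻¹) ≤ (2 * C₂ + 1)⁻¹ ^ b⁻¹ := by
    rw [← mul_assoc]
    refine mul_le_of_le_one_left' ?_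
    rw [← div_eq_mul_inv]
    exact div_le_one_of_le₀ le_self_add zero_le
  have h_half : C₂ * (2 * C₂ + 1)⁻¹ ≤ 2⁻¹ := by
    rw [← div_eq_mul_inv, div_le_iff₀ (by positivity), mul_add, inv_mul_cancel_left₀ two_ne_zero]
    exact le_self_add
  have h_rpow : C₂ * (2 * C₁ * N) ^ b ≤ 2⁻¹ := by
    have h_le : 2 * C₁ * N ≤ ((2 * C₂ + 1)⁻¹ ^ b⁻¹ : ℝ≥0) := by
      grw [hN]
      exact_mod_cast h_base
    grw [h_le, ← ENNReal.coe_rpow_of_nonneg _ hb.le, NNReal.rpow_inv_rpow hb.ne',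
      ← ENNReal.coe_two, ← ENNReal.coe_inv two_ne_zero, ← ENNReal.coe_mul, h_half]
  calc C₁ * N + C₂ * (2 * C₁ * N) ^ (1 + b)
      = C₁ * N + C₂ * (2 * C₁ * N) ^ b * (2 * C₁ * N) := by
        rw [rpow_one_add _ hb.le, mul_assoc (C₂ : ℝ≥0∞)]
    _ ≤ C₁ * N + 2⁻¹ * (2 * (C₁ * N)) := by
        grw [h_rpow, mul_assoc]
    _ = 2 * C₁ * N := by
        rw [← mul_assoc 2⁻¹, ENNReal.inv_mul_cancel two_ne_zero ofNat_ne_top, one_mul, mul_assoc,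
          two_mul]

lemma exists_criticalBound_duhamelMap (hn : 0 < n) {T₀ : ℝ} (hT₀ : 0 < T₀) : ∃ ε C : ℝ≥0, 0 < ε ∧
    ∀ (f : 𝔼 n → ℝ≥0∞) (T : ℝ) (v : ℝ → 𝔼 n → ℝ≥0∞), Measurable f →
      Measurable (Function.uncurry v) → T ≤ T₀ → zygMass ((n : ℝ) / 2) √T f ≤ ε →
      (∀ t, 0 < t → t < T →
        CriticalBound ((n : ℝ) / 2) √T t (C * zygMass ((n : ℝ) / 2) √T f) (v t)) →
      ∀ t, 0 < t → t < T →
        CriticalBound ((n : ℝ) / 2) √T t (C * zygMass ((n : ℝ) / 2) √T f)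
          (duhamelMap (fun t => heatFlow t f) (fun _ _ w => w ^ (1 + ((n : ℝ) / 2)⁻¹)) v t) := by
  have ha : 0 < (n : ℝ) / 2 := by positivity
  obtain ⟨C₁, h_heat⟩ := exists_criticalBound_heatFlow hn
  obtain ⟨C₂, h_rpow⟩ := CriticalBound.exists_sourceBound_rpow (X := 𝔼 n) ha hT₀
  obtain ⟨C₃, h_duhamel⟩ := exists_criticalBound_duhamel hn hT₀
  obtain ⟨ε, hε, h_small⟩ := exists_mul_add_mul_rpow_one_add_le C₁ (C₃ * C₂) (inv_pos.2 ha)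
  refine ⟨ε, 2 * C₁, hε, fun f T v hf hv hT h_le hvT t ht htT => ?_⟩
  have h_source (s : ℝ) (hs : 0 < s) (hst : s < t) := h_rpow _ s _ _ hs
    ((hst.trans htT).le.trans hT) hv.of_uncurry_left (hvT s hs (hst.trans htT))
  refine ((h_heat f T t hf ht htT.le).add (h_duhamel _ _ _ t (hv.pow_const _) ht
    (htT.le.trans hT) (Real.sqrt_le_sqrt htT.le) h_source) (by fun_prop)).mono ?_
  rw [← mul_assoc]
  exact_mod_cast h_small _ h_le

lemma exists_majorant (hn : 0 < n) {T₀ : ℝ} (hT₀ : 0 < T₀) : ∃ ε C : ℝ≥0, 0 < ε ∧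
    ∀ (f : 𝔼 n → ℝ≥0∞) (T : ℝ), Measurable f → T ≤ T₀ → zygMass ((n : ℝ) / 2) √T f ≤ ε →
      ∃ W : ℝ → 𝔼 n → ℝ≥0∞, Measurable (Function.uncurry W) ∧
        (∀ t x, W t x =
          heatFlow t f x + duhamel (fun s y => W s y ^ (1 + ((n : ℝ) / 2)⁻¹)) t x) ∧
        ∀ t, 0 < t → t < T →
          CriticalBound ((n : ℝ) / 2) √T t (C * zygMass ((n : ℝ) / 2) √T f) (W t) := by
  obtain ⟨ε, C, hε, h_step⟩ := exists_criticalBound_duhamelMap hn hT₀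
  refine ⟨ε, C, hε, fun f T hf hT hN => ?_⟩
  set h : ℝ → 𝔼 n → ℝ≥0∞ := fun t => heatFlow t f
  set G : ℝ → 𝔼 n → ℝ≥0∞ → ℝ≥0∞ := fun _ _ w => w ^ (1 + ((n : ℝ) / 2)⁻¹)
  have hh : Measurable (Function.uncurry h) :=
    measurable_heatFlow measurable_fst (hf.comp measurable_snd) measurable_snd
  have hG : Measurable fun q : ℝ × 𝔼 n × ℝ≥0∞ => G q.1 q.2.1 q.2.2 := by fun_prop
  have hG_mono (s : ℝ) (y : 𝔼 n) : Monotone (G s y) :=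
    ENNReal.monotone_rpow_of_nonneg (by positivity)
  have h_meas := measurable_iterate_duhamelMap hh hG
  have h_iter (k : ℕ) : ∀ t, 0 < t → t < T → CriticalBound ((n : ℝ) / 2) √T t
      (C * zygMass ((n : ℝ) / 2) √T f) ((duhamelMap h G)^[k] 0 t) := by
    induction k with
    | zero => exact fun _ _ _ => criticalBound_zero
    | succ k ih =>
      rw [Function.iterate_succ_apply']
      exact h_step f T _ hf (h_meas k) hT hN ih
  exact ⟨picardLimit h G, measurable_picardLimit hh hG,
    fun t => picardLimit_eq hh hG hG_mono fun _ _ _ _ => ENNReal.continuous_rpow_const,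
    fun t ht htT => CriticalBound.iSup (fun k => h_iter k t ht htT)
      (fun k => (h_meas k).of_uncurry_left)
      fun _ _ hij => monotone_iterate_duhamelMap hG_mono hij t⟩

end Majorant

section ShiftedPow

/-- The power nonlinearity `A ^ p + |v - A| ^ (p - 1) * (v - A)` shifted by `A`, written without
signed terms so that it is a monotone function of `v` with values in `[0, ∞]`. -/
noncomputable def shiftedPow (p : ℝ) (A v : ℝ≥0∞) : ℝ≥0∞ :=
  A ^ p - (A - v) ^ p + (v - A) ^ p

variable {p : ℝ} {A v : ℝ≥0∞}

lemma monotone_shiftedPow (hp : 0 ≤ p) (A : ℝ≥0∞) : Monotone (shiftedPow p A) := by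
  intro v w hvw
  unfold shiftedPow
  gcongr

lemma continuous_shiftedPow (hp : 0 ≤ p) (hA : A ≠ ⊤) : Continuous (shiftedPow p A) := by
  have h_rpow : Continuous fun v : ℝ≥0∞ => v ^ p := ENNReal.continuous_rpow_const
  exact ((ENNReal.continuous_sub_left (ENNReal.rpow_ne_top_of_nonneg hp hA)).comp
    (h_rpow.comp (ENNReal.continuous_sub_left hA))).add
    (h_rpow.comp (ENNReal.continuous_sub_right A))

@[fun_prop]
lemma measurable_shiftedPow {Y : Type*} [MeasurableSpace Y] {A v : Y → ℝ≥0∞} (hA : Measurable A)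
    (hv : Measurable v) : Measurable fun y => shiftedPow p (A y) (v y) := by
  unfold shiftedPow
  fun_prop

lemma shiftedPow_two_mul_le (hA : A ≠ ⊤) : shiftedPow p A (2 * A) ≤ 2 * A ^ p := by
  rw [shiftedPow, two_mul A, ENNReal.add_sub_cancel_right hA, two_mul]
  exact add_le_add_left tsub_le_self _

lemma toReal_shiftedPow_sub (hp : 0 < p) (hA : A ≠ ⊤) (hv : v ≠ ⊤) :
    (shiftedPow p A v).toReal - (A ^ p).toReal =
      |v.toReal - A.toReal| ^ (p - 1) * (v.toReal - A.toReal) := by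
  have h_rpow (x : ℝ) (hx : 0 ≤ x) : x ^ p = x ^ (p - 1) * x := by
    rw [← Real.rpow_add_one' hx (by simpa only [sub_add_cancel] using hp.ne'), sub_add_cancel]
  have hA_rpow := ENNReal.rpow_ne_top_of_nonneg hp.le hA
  rcases le_total v A with h | h
  · have h_sub : 0 ≤ A.toReal - v.toReal := sub_nonneg.2 (ENNReal.toReal_mono hA h)
    rw [shiftedPow, tsub_eq_zero_of_le h, ENNReal.zero_rpow_of_pos hp, add_zero,
      ENNReal.toReal_sub_of_le (ENNReal.rpow_le_rpow tsub_le_self hp.le) hA_rpow,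
      ← ENNReal.toReal_rpow, ← ENNReal.toReal_rpow, ENNReal.toReal_sub_of_le h hA, abs_sub_comm,
      abs_of_nonneg h_sub, h_rpow _ h_sub]
    ring
  · have h_sub : 0 ≤ v.toReal - A.toReal := sub_nonneg.2 (ENNReal.toReal_mono hv h)
    rw [shiftedPow, tsub_eq_zero_of_le h, ENNReal.zero_rpow_of_pos hp, tsub_zero,
      ENNReal.toReal_add hA_rpow
        (ENNReal.rpow_ne_top_of_nonneg hp.le (ne_top_of_le_ne_top hv tsub_le_self)),
      add_sub_cancel_left, ← ENNReal.toReal_rpow, ENNReal.toReal_sub_of_le h hv,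
      abs_of_nonneg h_sub, h_rpow _ h_sub]

end ShiftedPow

section SignedIntegrals

lemma integrable_and_integral_eq_toReal_lintegral_sub {α : Type*} [MeasurableSpace α]
    {μ : Measure α} {A B : α → ℝ≥0∞} {w : α → ℝ} (hA : AEMeasurable A μ) (hB : AEMeasurable B μ)
    (hA_fin : ∫⁻ x, A x ∂μ ≠ ⊤) (hB_fin : ∫⁻ x, B x ∂μ ≠ ⊤)
    (hw : w =ᵐ[μ] fun x => (A x).toReal - (B x).toReal) :
    Integrable w μ ∧ ∫ x, w x ∂μ = (∫⁻ x, A x ∂μ).toReal - (∫⁻ x, B x ∂μ).toReal := by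
  have hA_int := integrable_toReal_of_lintegral_ne_top hA hA_fin
  have hB_int := integrable_toReal_of_lintegral_ne_top hB hB_fin
  refine ⟨(hA_int.sub hB_int).congr hw.symm, ?_⟩
  rw [integral_congr_ae hw, integral_sub hA_int hB_int, integral_toReal hA (ae_lt_top' hA hA_fin),
    integral_toReal hB (ae_lt_top' hB hB_fin)]

variable {n : ℕ} {t : ℝ} {x : 𝔼 n}

lemma toReal_ofReal_heatKernel_mul (ht : 0 ≤ t) (x : 𝔼 n) (c : ℝ≥0∞) :
    (ENNReal.ofReal (heatKernel n x t) * c).toReal = heatKernel n x t * c.toReal := by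
  rw [ENNReal.toReal_mul, ENNReal.toReal_ofReal (heatKernel_nonneg ht x)]

lemma integrable_heatKernel_mul_and_integral_eq (ht : 0 ≤ t) {f g : 𝔼 n → ℝ≥0∞} {w : 𝔼 n → ℝ}
    (hf : Measurable f) (hg : Measurable g) (hf_fin : heatFlow t f x ≠ ⊤)
    (hg_fin : heatFlow t g x ≠ ⊤) (hw : ∀ y, w y = (f y).toReal - (g y).toReal) :
    Integrable (fun y => heatKernel n (x - y) t * w y) volume ∧
      ∫ y, heatKernel n (x - y) t * w y =
        (heatFlow t f x).toReal - (heatFlow t g x).toReal :=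
  integrable_and_integral_eq_toReal_lintegral_sub (by fun_prop) (by fun_prop) hf_fin hg_fin <|
    ae_of_all _ fun y => by
      simp only [hw y, mul_sub, toReal_ofReal_heatKernel_mul ht]

lemma measurable_heatKernel_mul_swap {g : ℝ → 𝔼 n → ℝ≥0∞} (hg : Measurable (Function.uncurry g))
    (t : ℝ) (x : 𝔼 n) : Measurable fun q : 𝔼 n × ℝ =>
      ENNReal.ofReal (heatKernel n (x - q.1) (t - q.2)) * g q.2 q.1 :=
  Measurable.mul (by fun_prop) (hg.comp measurable_swap)

lemma lintegral_prod_heatKernel_mul {g : ℝ → 𝔼 n → ℝ≥0∞} (hg : Measurable (Function.uncurry g))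
    (t : ℝ) (x : 𝔼 n) :
    ∫⁻ q : 𝔼 n × ℝ, ENNReal.ofReal (heatKernel n (x - q.1) (t - q.2)) * g q.2 q.1
      ∂(volume.prod (volume.restrict (Ioo 0 t))) = duhamel g t x :=
  lintegral_prod_symm' _ (measurable_heatKernel_mul_swap hg t x)

lemma ae_snd_mem_Ioo (n : ℕ) (t : ℝ) :
    ∀ᵐ q : 𝔼 n × ℝ ∂(volume.prod (volume.restrict (Ioo 0 t))), q.2 ∈ Ioo 0 t :=
  Measure.quasiMeasurePreserving_snd.ae (ae_restrict_mem measurableSet_Ioo)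

lemma integrable_heatKernel_mul_and_integral_eq_duhamel {f g : ℝ → 𝔼 n → ℝ≥0∞}
    {w : 𝔼 n → ℝ → ℝ} (hf : Measurable (Function.uncurry f)) (hg : Measurable (Function.uncurry g))
    (hf_fin : duhamel f t x ≠ ⊤) (hg_fin : duhamel g t x ≠ ⊤)
    (hw : ∀ s, 0 < s → s < t → ∀ y, w y s = (f s y).toReal - (g s y).toReal) :
    Integrable (fun q : 𝔼 n × ℝ => heatKernel n (x - q.1) (t - q.2) * w q.1 q.2)
        (volume.prod (volume.restrict (Ioo 0 t))) ∧
      ∫ s in Ioo 0 t, ∫ y, heatKernel n (x - y) (t - s) * w y s =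
        (duhamel f t x).toReal - (duhamel g t x).toReal := by
  rw [← lintegral_prod_heatKernel_mul hf] at hf_fin ⊢
  rw [← lintegral_prod_heatKernel_mul hg] at hg_fin ⊢
  obtain ⟨h_int, h_eq⟩ := integrable_and_integral_eq_toReal_lintegral_sub
    (w := fun q : 𝔼 n × ℝ => heatKernel n (x - q.1) (t - q.2) * w q.1 q.2)
    (measurable_heatKernel_mul_swap hf t x).aemeasurable
    (measurable_heatKernel_mul_swap hg t x).aemeasurable hf_fin hg_fin <| by
      filter_upwards [ae_snd_mem_Ioo n t] with q hq
      have hts : 0 ≤ t - q.2 := sub_nonneg.2 hq.2.le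
      rw [toReal_ofReal_heatKernel_mul hts, toReal_ofReal_heatKernel_mul hts, hw _ hq.1 hq.2,
        mul_sub]
  exact ⟨h_int, (integral_prod_symm _ h_int).symm.trans h_eq⟩

end SignedIntegrals

section SignedSolution

variable {n : ℕ} {p t T : ℝ} {φ : 𝔼 n → ℝ} {v W : ℝ → 𝔼 n → ℝ≥0∞}

lemma heatFlow_ofReal_abs (hφ : Measurable φ) (t : ℝ) (x : 𝔼 n) :
    heatFlow t (fun y => ENNReal.ofReal |φ y|) x =
      heatFlow t (fun y => ENNReal.ofReal (φ y)) x +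
        heatFlow t (fun y => ENNReal.ofReal (-φ y)) x := by
  rw [← heatFlow_add (by fun_prop)]
  congr 1 with y
  rcases le_total 0 (φ y) with h | h
  · rw [abs_of_nonneg h, ENNReal.ofReal_of_nonpos (neg_nonpos.2 h), add_zero]
  · rw [abs_of_nonpos h, ENNReal.ofReal_of_nonpos h, zero_add]

lemma isSolution_toReal_sub_toReal (hp : 0 < p) (hφ : Measurable φ)
    (hW : Measurable (Function.uncurry W)) (hv : Measurable (Function.uncurry v))
    (hW_fin : ∀ t, 0 < t → t < T → ∀ x, W t x ≠ ⊤) (hv_fin : ∀ t, 0 < t → t < T → ∀ x, v t x ≠ ⊤)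
    (hW_eq : ∀ t, 0 < t → t < T → ∀ x, W t x =
      heatFlow t (fun y => ENNReal.ofReal |φ y|) x + duhamel (fun s y => W s y ^ p) t x)
    (hv_eq : ∀ t, 0 < t → t < T → ∀ x, v t x = 2 * heatFlow t (fun y => ENNReal.ofReal (φ y)) x +
      duhamel (fun s y => shiftedPow p (W s y) (v s y)) t x) :
    IsSolution n p T φ (fun x t => (v t x).toReal - (W t x).toReal) := by
  refine ⟨(hv.comp measurable_swap).ennreal_toReal.sub (hW.comp measurable_swap).ennreal_toReal, ?_⟩
  filter_upwards [ae_snd_mem_Ioo n T] with ⟨x, t⟩ ⟨ht, htT⟩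
  have hWt := hW_eq t ht htT x
  have hvt := hv_eq t ht htT x
  rw [heatFlow_ofReal_abs hφ] at hWt
  obtain ⟨h_lin_fin, hDW⟩ := ENNReal.add_ne_top.1 (hWt ▸ hW_fin t ht htT x)
  obtain ⟨hP, hQ⟩ := ENNReal.add_ne_top.1 h_lin_fin
  have hDv := (ENNReal.add_ne_top.1 (hvt ▸ hv_fin t ht htT x)).2
  obtain ⟨h_lin_int, h_lin⟩ := integrable_heatKernel_mul_and_integral_eq (w := φ) ht.le
    (by fun_prop) (by fun_prop) hP hQ fun y => by
      rw [ENNReal.toReal_ofReal', ENNReal.toReal_ofReal', max_zero_sub_max_neg_zero_eq_self]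
  obtain ⟨h_duh_int, h_duh⟩ := integrable_heatKernel_mul_and_integral_eq_duhamel
    (measurable_shiftedPow hW hv) (hW.pow_const p) hDv hDW fun s hs hst y =>
      (toReal_shiftedPow_sub hp (hW_fin s hs (hst.trans htT) y)
        (hv_fin s hs (hst.trans htT) y)).symm
  refine ⟨h_lin_int, h_duh_int, ?_⟩
  dsimp only
  rw [h_lin, h_duh, hvt, hWt, ENNReal.toReal_add (ENNReal.mul_ne_top ofNat_ne_top hP) hDv,
    ENNReal.toReal_mul, ENNReal.toReal_ofNat, ENNReal.toReal_add h_lin_fin hDW,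
    ENNReal.toReal_add hP hQ]
  ring

lemma duhamelMap_shiftedPow_two_mul_le (hW : Measurable (Function.uncurry W))
    (hW_fin : ∀ s, 0 < s → s < t → ∀ x, W s x ≠ ⊤) {f g : 𝔼 n → ℝ≥0∞} (hfg : ∀ y, f y ≤ g y)
    {x : 𝔼 n} (hW_eq : W t x = heatFlow t g x + duhamel (fun s y => W s y ^ p) t x) :
    duhamelMap (fun t x => 2 * heatFlow t f x) (fun s y => shiftedPow p (W s y))
      (fun s y => 2 * W s y) t x ≤ 2 * W t x := by
  have h_duhamel : duhamel (fun s y => shiftedPow p (W s y) (2 * W s y)) t x ≤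
      2 * duhamel (fun s y => W s y ^ p) t x := by
    rw [← duhamel_const_mul (hW.pow_const p)]
    exact duhamel_mono (fun s hs hst y => shiftedPow_two_mul_le (hW_fin s hs hst y)) x
  rw [hW_eq, mul_add]
  exact add_le_add (mul_le_mul_right (heatFlow_mono hfg t x) 2) h_duhamel

lemma ofReal_abs_toReal_sub_le {a b : ℝ≥0∞} (hb : b ≠ ⊤) (h : a ≤ 2 * b) :
    ENNReal.ofReal |a.toReal - b.toReal| ≤ b := by
  have h_toReal := ENNReal.toReal_mono (ENNReal.mul_ne_top ofNat_ne_top hb) h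
  rw [ENNReal.toReal_mul, ENNReal.toReal_ofNat] at h_toReal
  rw [ENNReal.ofReal_le_iff_le_toReal hb, abs_le]
  constructor <;> linarith [ENNReal.toReal_nonneg (a := a)]

lemma exists_isSolution_abs_le (hp : 0 < p) (hφ : Measurable φ)
    (hW : Measurable (Function.uncurry W)) (hW_fin : ∀ t, 0 < t → t < T → ∀ x, W t x ≠ ⊤)
    (hW_eq : ∀ t, 0 < t → t < T → ∀ x, W t x =
      heatFlow t (fun y => ENNReal.ofReal |φ y|) x + duhamel (fun s y => W s y ^ p) t x) :
    ∃ u : 𝔼 n → ℝ → ℝ, IsSolution n p T φ u ∧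
      ∀ t, 0 < t → t < T → ∀ x, ENNReal.ofReal |u x t| ≤ W t x := by
  set h : ℝ → 𝔼 n → ℝ≥0∞ := fun t x => 2 * heatFlow t (fun y => ENNReal.ofReal (φ y)) x
  set G : ℝ → 𝔼 n → ℝ≥0∞ → ℝ≥0∞ := fun s y => shiftedPow p (W s y)
  have hh : Measurable (Function.uncurry h) :=
    (measurable_heatFlow (f := fun _ y => ENNReal.ofReal (φ y)) measurable_fst
      (by fun_prop) measurable_snd).const_mul 2
  have hG : Measurable fun q : ℝ × 𝔼 n × ℝ≥0∞ => G q.1 q.2.1 q.2.2 :=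
    measurable_shiftedPow (hW.comp (by fun_prop : Measurable fun q : ℝ × 𝔼 n × ℝ≥0∞ =>
      (q.1, q.2.1))) (by fun_prop)
  have hG_mono (s : ℝ) (y : 𝔼 n) : Monotone (G s y) := monotone_shiftedPow hp.le _
  have h_le : ∀ t, 0 < t → t < T → ∀ x, picardLimit h G t x ≤ 2 * W t x := fun t ht htT =>
    picardLimit_le (V := fun t x => 2 * W t x) hG_mono (fun t ht htT x =>
      duhamelMap_shiftedPow_two_mul_le hW (fun s hs hst => hW_fin s hs (hst.trans htT))
        (fun y => ENNReal.ofReal_le_ofReal (le_abs_self (φ y))) (hW_eq t ht htT x)) ht htT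
  refine ⟨_, isSolution_toReal_sub_toReal hp hφ hW (measurable_picardLimit hh hG) hW_fin
    (fun t ht htT x => ne_top_of_le_ne_top
      (ENNReal.mul_ne_top ofNat_ne_top (hW_fin t ht htT x)) (h_le t ht htT x)) hW_eq
    fun t _ htT => picardLimit_eq hh hG hG_mono fun s hs hst y =>
      continuous_shiftedPow hp.le (hW_fin s hs (hst.trans htT) y), fun t ht htT x =>
    ofReal_abs_toReal_sub_le (hW_fin t ht htT x) (h_le t ht htT x)⟩

lemma IsSolution.congr_initial {ψ : 𝔼 n → ℝ} {u : 𝔼 n → ℝ → ℝ} (hu : IsSolution n p T φ u)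
    (h : φ =ᵐ[volume] ψ) : IsSolution n p T ψ u := by
  refine ⟨hu.1, hu.2.mono fun q ⟨h_lin, h_duh, h_eq⟩ => ?_⟩
  have h_congr : (fun y => heatKernel n (q.1 - y) q.2 * φ y) =ᵐ[volume]
      fun y => heatKernel n (q.1 - y) q.2 * ψ y := h.mono fun y hy => by simp only [hy]
  exact ⟨h_lin.congr h_congr, h_duh, by rwa [← integral_congr_ae h_congr]⟩

end SignedSolution

section NormBounds

variable {n : ℕ} {a α γ ρ t T : ℝ} {M : ℝ≥0∞} {f : 𝔼 n → ℝ}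

lemma zygNormUL_one_eq (hα : 0 ≤ α) (ρ : ℝ) (f : 𝔼 n → ℝ) :
    zygNormUL n 1 α ρ f = zygMass α ρ (fun x => ENNReal.ofReal |f x|) := by
  simp only [zygNormUL_eq one_pos hα, Real.rpow_one, div_one, ENNReal.rpow_one]

lemma CriticalBound.eLpNorm_top_le (hf : CriticalBound a ρ t M (fun x => ENNReal.ofReal |f x|))
    (ht : 0 ≤ t) :
    eLpNorm f ⊤ volume ≤ M * ENNReal.ofReal (t ^ (-a) * logFac t ^ (-a)) := by
  rw [← Real.mul_rpow ht (logFac_pos ht).le, eLpNorm_exponent_top]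
  refine eLpNormEssSup_le_of_ae_enorm_bound (ae_of_all _ fun x => ?_)
  rw [Real.enorm_eq_ofReal_abs]
  exact hf.le x

lemma CriticalBound.exists_zygNormUL_le (n : ℕ) (ha : 0 < a) (hγ : 0 ≤ γ) (hT : 0 < T) {p : ℝ}
    (hp : p = 1 + a⁻¹) : ∃ C : ℝ≥0, ∀ (ρ t : ℝ) (M : ℝ≥0∞) (f : 𝔼 n → ℝ), 0 < t → t ≤ T →
      Measurable f → CriticalBound a ρ t M (fun x => ENNReal.ofReal |f x|) →
      zygNormUL n p γ ρ f ≤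
        C * M * ENNReal.ofReal (t ^ (-a * (1 - 1 / p)) * logFac t ^ (-a + γ / p)) := by
  have hp_pos : 0 < p := by
    rw [hp]
    positivity
  have h_time : -1 * (1 / p) = -a * (1 - 1 / p) := by
    rw [hp]
    field_simp
    ring
  have h_log : (γ - (a + 1)) * (1 / p) = -a + γ / p := by
    rw [hp]
    field_simp
    ring
  obtain ⟨C, hC⟩ := CriticalBound.exists_zygMass_rpow_le (X := 𝔼 n) ha hγ hT
  refine ⟨C ^ (1 / p), fun ρ t M f ht htT hf h => ?_⟩
  have hL := logFac_pos ht.le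
  have h_mass := hC ρ t M _ ht htT (by fun_prop) h
  rw [← hp] at h_mass
  simp only [zygNormUL_eq hp_pos hγ, ← ENNReal.ofReal_rpow_of_nonneg (abs_nonneg _) hp_pos.le]
  grw [h_mass]
  rw [ENNReal.mul_rpow_of_nonneg _ _ (by positivity),
    ENNReal.mul_rpow_of_nonneg _ _ (by positivity), ← ENNReal.rpow_mul,
    mul_one_div_cancel hp_pos.ne', ENNReal.rpow_one, ENNReal.ofReal_rpow_of_pos (by positivity),
    Real.mul_rpow (by positivity) (by positivity), ← Real.rpow_neg_one, ← Real.rpow_mul ht.le,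
    ← Real.rpow_mul hL.le, h_time, h_log, ENNReal.coe_rpow_of_nonneg _ (by positivity),
    mul_left_comm, mul_assoc]

end NormBounds

lemma exists_isSolution_criticalBound {n : ℕ} (hn : 0 < n) {p : ℝ} (hp : p = 1 + ((n : ℝ) / 2)⁻¹)
    {T₀ : ℝ} (hT₀ : 0 < T₀) : ∃ ε C : ℝ≥0, 0 < ε ∧ ∀ (φ : 𝔼 n → ℝ) (T : ℝ),
      AEStronglyMeasurable φ volume → T ≤ T₀ → zygNormUL n 1 ((n : ℝ) / 2) √T φ ≤ ε →
      ∃ u : 𝔼 n → ℝ → ℝ, IsSolution n p T φ u ∧ ∀ t, 0 < t → t < T →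
        CriticalBound ((n : ℝ) / 2) √T t (C * zygNormUL n 1 ((n : ℝ) / 2) √T φ)
          (fun x => ENNReal.ofReal |u x t|) := by
  obtain ⟨ε, C, hε, h_maj⟩ := exists_majorant hn hT₀
  refine ⟨ε, C, hε, fun φ T hφ hT hN => ?_⟩
  obtain ⟨ψ, hψ, hφψ⟩ := hφ
  have hψ_meas := hψ.measurable
  have h_norm : zygMass ((n : ℝ) / 2) √T (fun x => ENNReal.ofReal |ψ x|) ≤
      zygNormUL n 1 ((n : ℝ) / 2) √T φ := by
    rw [zygNormUL_one_eq (by positivity)]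
    exact zygMass_mono_ae (hφψ.mono fun x hx => by simp only [hx, le_refl])
  obtain ⟨W, hW, hW_eq, hW_bound⟩ := h_maj _ T (by fun_prop) hT (h_norm.trans hN)
  rw [← hp] at hW_eq
  have hW_fin (t : ℝ) (ht : 0 < t) (htT : t < T) (x : 𝔼 n) : W t x ≠ ⊤ := by
    refine ne_top_of_le_ne_top ?_ ((hW_bound t ht htT).le x)
    exact ENNReal.mul_ne_top (ENNReal.mul_ne_top coe_ne_top
      (ne_top_of_le_ne_top coe_ne_top (h_norm.trans hN))) ofReal_ne_top
  have hp_pos : 0 < p := by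
    rw [hp]
    positivity
  obtain ⟨u, hu, huW⟩ := exists_isSolution_abs_le hp_pos hψ_meas hW hW_fin fun t _ _ => hW_eq t
  exact ⟨u, hu.congr_initial hφψ.symm, fun t ht htT =>
    ((hW_bound t ht htT).mono_fun (huW t ht htT)).mono (mul_le_mul_right h_norm _)⟩

theorem stmt5_general (n : ℕ) (hn : 1 ≤ n) (p : ℝ) (hp : p = 1 + 2 / n)
    (Tstar : ℝ) (hTstar : 0 < Tstar) (γ : ℝ) (hγ0 : 0 ≤ γ) :
    ∃ ε > (0 : ℝ), ∃ C > (0 : ℝ), ∀ φ : EuclideanSpace ℝ (Fin n) → ℝ,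
      AEStronglyMeasurable φ volume →
      ∀ T : ℝ, T ≤ Tstar →
        zygNormUL n 1 ((n : ℝ) / 2) (T ^ ((1 : ℝ) / 2)) φ ≤ ENNReal.ofReal ε →
        ∃ u : EuclideanSpace ℝ (Fin n) → ℝ → ℝ,
          IsSolution n p T φ u ∧
          ∀ t : ℝ, 0 < t → t < T →
            zygNormUL n 1 ((n : ℝ) / 2) (T ^ ((1 : ℝ) / 2)) (fun x => u x t) ≤
              ENNReal.ofReal C * zygNormUL n 1 ((n : ℝ) / 2) (T ^ ((1 : ℝ) / 2)) φ ∧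
            zygNormUL n p γ (T ^ ((1 : ℝ) / 2)) (fun x => u x t) ≤
              ENNReal.ofReal (C * t ^ (-((n : ℝ) / 2) * (1 - 1 / p)) *
                  logFac t ^ (-(n : ℝ) / 2 + γ / p)) *
                zygNormUL n 1 ((n : ℝ) / 2) (T ^ ((1 : ℝ) / 2)) φ ∧
            eLpNorm (fun x => u x t) ⊤ volume ≤
              ENNReal.ofReal (C * t ^ (-(n : ℝ) / 2) * logFac t ^ (-(n : ℝ) / 2)) *
                zygNormUL n 1 ((n : ℝ) / 2) (T ^ ((1 : ℝ) / 2)) φ := by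
  rw [← inv_div] at hp
  have ha : 0 < (n : ℝ) / 2 := by positivity
  obtain ⟨ε, C₀, hε, h_sol⟩ := exists_isSolution_criticalBound hn hp hTstar
  obtain ⟨C₁, h_zyg⟩ := CriticalBound.exists_zygNormUL_le n ha hγ0 hTstar hp
  set C := (C₁ + 1) * C₀ + 1 with hC
  have hC₀ : C₀ ≤ C := by
    rw [hC, add_one_mul, add_assoc, add_left_comm]
    exact le_self_add
  have hC₁ : C₁ * C₀ ≤ C := by
    rw [hC, add_one_mul, add_assoc]
    exact le_self_add
  have h_ofReal (x y : ℝ) : ENNReal.ofReal (C * x * y) = C * ENNReal.ofReal (x * y) := by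
    rw [mul_assoc, ENNReal.ofReal_mul C.coe_nonneg, ENNReal.ofReal_coe_nnreal]
  simp only [← Real.sqrt_eq_rpow, neg_div]
  refine ⟨ε, hε, C, by positivity, fun φ hφ T hT hN => ?_⟩
  obtain ⟨u, hu, hu_bound⟩ := h_sol φ T hφ hT (by rwa [ENNReal.ofReal_coe_nnreal] at hN)
  refine ⟨u, hu, fun t ht htT => ?_⟩
  have h := hu_bound t ht htT
  simp only [h_ofReal, ENNReal.ofReal_coe_nnreal]
  refine ⟨?_, ?_, ?_⟩
  · grw [zygNormUL_one_eq ha.le, h.zygMass_le, hC₀]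
  · grw [h_zyg _ t _ _ ht (htT.le.trans hT) hu.1.of_uncurry_right h, ← mul_assoc,
      ← ENNReal.coe_mul, hC₁, mul_right_comm]
  · grw [h.eLpNorm_top_le ht.le, hC₀, mul_right_comm]

theorem stmt5 (n : ℕ) (hn : 1 ≤ n) (p : ℝ) (hp : p = 1 + 2 / n)
    (Tstar : ℝ) (hTstar : 0 < Tstar) (γ : ℝ) (hγ0 : 0 ≤ γ) (hγ : γ < (n : ℝ) / 2) :
    ∃ ε > (0 : ℝ), ∃ C > (0 : ℝ), ∀ φ : EuclideanSpace ℝ (Fin n) → ℝ,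
      LocallyIntegrable φ volume →
      ∀ T : ℝ, 0 < T → T ≤ Tstar →
        zygNormUL n 1 ((n : ℝ) / 2) (T ^ ((1 : ℝ) / 2)) φ ≤ ENNReal.ofReal ε →
        ∃ u : EuclideanSpace ℝ (Fin n) → ℝ → ℝ,
          IsSolution n p T φ u ∧
          ∀ t : ℝ, 0 < t → t < T →
            zygNormUL n 1 ((n : ℝ) / 2) (T ^ ((1 : ℝ) / 2)) (fun x => u x t) ≤
              ENNReal.ofReal C * zygNormUL n 1 ((n : ℝ) / 2) (T ^ ((1 : ℝ) / 2)) φ ∧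
            zygNormUL n p γ (T ^ ((1 : ℝ) / 2)) (fun x => u x t) ≤
              ENNReal.ofReal (C * t ^ (-((n : ℝ) / 2) * (1 - 1 / p)) *
                  logFac t ^ (-(n : ℝ) / 2 + γ / p)) *
                zygNormUL n 1 ((n : ℝ) / 2) (T ^ ((1 : ℝ) / 2)) φ ∧
            eLpNorm (fun x => u x t) ⊤ volume ≤
              ENNReal.ofReal (C * t ^ (-(n : ℝ) / 2) * logFac t ^ (-(n : ℝ) / 2)) *
                zygNormUL n 1 ((n : ℝ) / 2) (T ^ ((1 : ℝ) / 2)) φ := by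
  obtain ⟨ε, hε, C, hC, h⟩ := stmt5_general n hn p hp Tstar hTstar γ hγ0
  exact ⟨ε, hε, C, hC, fun φ hφ T _ => h φ hφ.aestronglyMeasurable T⟩
end

section
/- Let n ≥ 1, θ ∈ (0,2], 1 ≤ r ≤ q < ∞, and γ ∈ ℝ, and assume γ ≥ 0 if r = q. Then there exists C > 0 such that for all t > 0, ∫_0^∞ τ^{q(1 − 1/r)} [log(e + 1/τ)]^γ (t^{−n/θ} (1 + t^{−1/θ} τ^{1/n})^{−n−θ})^q dτ ≤ C t^{−(nq/θ)(1/r − 1/q)} [log(e + 1/t)]^γ. -/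
/-!
Put `T = t ^ (n / θ)`. The kernel profile is self-similar, `k_t(τ) = T⁻¹ k_1(τ / T)`, so the
substitution `τ = T s` pulls the right power of `t` out of the integral. What is left is the weight
`L(x) = log (e + 1 / x)`, which varies slowly: `L(T s)` and `L(T)` agree up to the factor
`1 + |log s|`, whatever `T` is. Such a factor costs no more than a small power `s ^ δ + s ^ (-δ)`,
and the integrability conditions on the exponents are open. Finally `L(T)` and `L(t)` are comparable
because `T` is a power of `t`.
-/

open MeasureTheory Real Set

theorem rpow_le_rpow_abs_mul_rpow {x y K : ℝ} (γ : ℝ) (hx : 0 < x) (hy : 0 < y)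
    (hxy : x ≤ K * y) (hyx : y ≤ K * x) : x ^ γ ≤ K ^ |γ| * y ^ γ := by
  have hK : 0 < K := pos_of_mul_pos_left (hx.trans_le hxy) hy.le
  rcases le_total 0 γ with hγ | hγ
  · rw [abs_of_nonneg hγ, ← mul_rpow hK.le hy.le]
    exact rpow_le_rpow hx.le hxy hγ
  · rw [abs_of_nonpos hγ, rpow_neg hK.le, ← inv_rpow hK.le, ← mul_rpow (inv_pos.2 hK).le hy.le]
    exact rpow_le_rpow_of_nonpos (by positivity) ((inv_mul_le_iff₀ hK).2 hyx) hγ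

theorem exists_one_add_rpow_le_mul_exp {g δ : ℝ} (hg : 0 ≤ g) (hδ : 0 < δ) :
    ∃ C > 0, ∀ u ≥ 0, (1 + u) ^ g ≤ C * exp (δ * u) := by
  -- `g + 1` instead of `g` in the denominator covers `g = 0`.
  set ε := δ / (g + 1) with hε
  have hε0 : 0 < ε := by positivity
  have hεg : ε * g ≤ δ := by
    rw [hε, div_mul_eq_mul_div, div_le_iff₀ (by positivity)]
    linarith [mul_add_one δ g]
  refine ⟨(1 + ε⁻¹) ^ g, by positivity, fun u hu => ?_⟩
  have hlin : 1 + u ≤ (1 + ε⁻¹) * exp (ε * u) := by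
    have h1 : 1 ≤ exp (ε * u) := one_le_exp (by positivity)
    have h2 : u ≤ ε⁻¹ * exp (ε * u) := by
      rw [le_inv_mul_iff₀ hε0]
      linarith [add_one_le_exp (ε * u)]
    linarith [add_one_mul ε⁻¹ (exp (ε * u))]
  calc (1 + u) ^ g ≤ ((1 + ε⁻¹) * exp (ε * u)) ^ g := rpow_le_rpow (by positivity) hlin hg
    _ = (1 + ε⁻¹) ^ g * exp (ε * g * u) := by
      rw [mul_rpow (by positivity) (exp_pos _).le, ← exp_mul, mul_right_comm]
    _ ≤ (1 + ε⁻¹) ^ g * exp (δ * u) := by gcongr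

theorem exp_mul_abs_log_le {s : ℝ} (hs : 0 < s) (δ : ℝ) :
    exp (δ * |log s|) ≤ s ^ δ + s ^ (-δ) := by
  rw [rpow_def_of_pos hs, rpow_def_of_pos hs]
  rcases abs_choice (log s) with h | h <;> rw [h]
  · rw [mul_comm δ]
    exact le_add_of_nonneg_right (exp_pos _).le
  · rw [mul_neg, ← neg_mul, mul_comm (-δ)]
    exact le_add_of_nonneg_left (exp_pos _).le

theorem exists_one_add_abs_log_rpow_le {g δ : ℝ} (hg : 0 ≤ g) (hδ : 0 < δ) :
    ∃ C > 0, ∀ s > 0, (1 + |log s|) ^ g ≤ C * (s ^ δ + s ^ (-δ)) := by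
  obtain ⟨C, hC, h⟩ := exists_one_add_rpow_le_mul_exp hg hδ
  refine ⟨C, hC, fun s hs => (h _ (abs_nonneg _)).trans ?_⟩
  gcongr
  exact exp_mul_abs_log_le hs δ

theorem integrableOn_rpow_mul_one_add_rpow_rpow {κ b p : ℝ} (hκ : 0 < κ) (hb : -1 < b)
    (hbp : b + κ * p < -1) :
    IntegrableOn (fun s : ℝ => s ^ b * (1 + s ^ κ) ^ p) (Ioi 0) := by
  have hp : p ≤ 0 := by
    by_contra! hp
    linarith [mul_pos hκ hp]
  have hmeas (S : Set ℝ) :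
      AEStronglyMeasurable (fun s : ℝ => s ^ b * (1 + s ^ κ) ^ p) (volume.restrict S) :=
    Measurable.aestronglyMeasurable (by fun_prop)
  rw [← Ioc_union_Ioi_eq_Ioi (zero_le_one (α := ℝ))]
  refine IntegrableOn.union ?near_zero ?near_infinity
  case near_zero =>
    have hint : IntegrableOn (fun s : ℝ => s ^ b) (Ioc 0 1) :=
      (intervalIntegral.intervalIntegrable_rpow' hb).1
    refine hint.mono' (hmeas _) (ae_restrict_of_forall_mem measurableSet_Ioc fun s hs => ?_)
    have hs0 : 0 < s := hs.1
    have hle : (1 + s ^ κ) ^ p ≤ 1 :=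
      rpow_le_one_of_one_le_of_nonpos (le_add_of_nonneg_right (by positivity)) hp
    rw [norm_of_nonneg (by positivity)]
    exact mul_le_of_le_one_right (by positivity) hle
  case near_infinity =>
    have hint : IntegrableOn (fun s : ℝ => s ^ (b + κ * p)) (Ioi 1) :=
      integrableOn_Ioi_rpow_of_lt hbp one_pos
    refine hint.mono' (hmeas _) (ae_restrict_of_forall_mem measurableSet_Ioi fun s hs => ?_)
    have hs0 : 0 < s := one_pos.trans hs
    have hle : (1 + s ^ κ) ^ p ≤ (s ^ κ) ^ p :=
      rpow_le_rpow_of_nonpos (by positivity) (by linarith) hp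
    rw [norm_of_nonneg (by positivity), rpow_add hs0, rpow_mul hs0.le]
    gcongr

theorem integrableOn_rpow_mul_one_add_abs_log_rpow_mul_one_add_rpow_rpow {κ b p g : ℝ}
    (hκ : 0 < κ) (hb : -1 < b) (hbp : b + κ * p < -1) (hg : 0 ≤ g) :
    IntegrableOn (fun s : ℝ => s ^ b * (1 + |log s|) ^ g * (1 + s ^ κ) ^ p) (Ioi 0) := by
  obtain ⟨δ, hδ, hδ'⟩ : ∃ δ > 0, δ < min (b + 1) (-1 - (b + κ * p)) :=
    exists_between (lt_min (by linarith) (by linarith))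
  obtain ⟨hδb, hδp⟩ := lt_min_iff.1 hδ'
  obtain ⟨C, -, hC⟩ := exists_one_add_abs_log_rpow_le hg hδ
  have hplus := integrableOn_rpow_mul_one_add_rpow_rpow (b := b + δ) (p := p) hκ
    (by linarith) (by linarith)
  have hminus := integrableOn_rpow_mul_one_add_rpow_rpow (b := b + -δ) (p := p) hκ
    (by linarith) (by linarith)
  refine ((hplus.add hminus).const_mul C).mono' (Measurable.aestronglyMeasurable (by fun_prop))
    (ae_restrict_of_forall_mem measurableSet_Ioi fun s (hs : 0 < s) => ?_)
  rw [norm_of_nonneg (by positivity)]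
  calc s ^ b * (1 + |log s|) ^ g * (1 + s ^ κ) ^ p
      ≤ s ^ b * (C * (s ^ δ + s ^ (-δ))) * (1 + s ^ κ) ^ p := by
        gcongr
        exact hC s hs
    _ = C * (s ^ (b + δ) * (1 + s ^ κ) ^ p + s ^ (b + -δ) * (1 + s ^ κ) ^ p) := by
        rw [rpow_add hs, rpow_add hs]
        ring

/-- The logarithmic weight `log (e + 1 / x)`, meant for `x > 0`. -/
noncomputable def logWeight (x : ℝ) : ℝ := log (exp 1 + 1 / x)

theorem one_le_logWeight {x : ℝ} (hx : 0 < x) : 1 ≤ logWeight x := by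
  rw [logWeight, le_log_iff_exp_le (by positivity)]
  exact le_add_of_nonneg_right (by positivity)

theorem logWeight_pos {x : ℝ} (hx : 0 < x) : 0 < logWeight x :=
  one_pos.trans_le (one_le_logWeight hx)

@[fun_prop]
theorem measurable_logWeight : Measurable logWeight := by
  unfold logWeight
  fun_prop

theorem logWeight_mul_le {x s : ℝ} (hx : 0 < x) (hs : 0 < s) :
    logWeight (x * s) ≤ (1 + |log s|) * logWeight x := by
  have hexp : 1 ≤ exp |log s| := one_le_exp (abs_nonneg _)
  have hinv : s⁻¹ ≤ exp |log s| := by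
    rw [← exp_log (inv_pos.2 hs), log_inv]
    exact exp_le_exp.2 (neg_le_abs _)
  calc logWeight (x * s) ≤ log (exp |log s| * (exp 1 + 1 / x)) := by
        refine log_le_log (by positivity) ?_
        calc exp 1 + 1 / (x * s) = 1 * exp 1 + s⁻¹ * (1 / x) := by field_simp
          _ ≤ exp |log s| * exp 1 + exp |log s| * (1 / x) := by gcongr
          _ = exp |log s| * (exp 1 + 1 / x) := (mul_add _ _ _).symm
    _ = |log s| + logWeight x := by
        rw [log_mul (exp_pos _).ne' (by positivity), log_exp, logWeight]
    _ ≤ (1 + |log s|) * logWeight x := by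
        linarith [le_mul_of_one_le_right (abs_nonneg (log s)) (one_le_logWeight hx)]

theorem logWeight_mul_rpow_le {x s : ℝ} (γ : ℝ) (hx : 0 < x) (hs : 0 < s) :
    logWeight (x * s) ^ γ ≤ (1 + |log s|) ^ |γ| * logWeight x ^ γ := by
  have hxs : 0 < x * s := mul_pos hx hs
  refine rpow_le_rpow_abs_mul_rpow γ (logWeight_pos hxs) (logWeight_pos hx)
    (logWeight_mul_le hx hs) ?_
  simpa [hs.ne'] using logWeight_mul_le hxs (inv_pos.2 hs)

theorem logWeight_rpow_le {x p : ℝ} (hx : 0 < x) (hp : 0 ≤ p) :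
    logWeight (x ^ p) ≤ (p + 2) * logWeight x := by
  set y := exp 1 + 1 / x
  have hy0 : 0 < y := by positivity
  have he : 2 ≤ exp 1 := by linarith [add_one_le_exp 1]
  have hy1 : 1 ≤ y := by linarith [one_div_pos.2 hx]
  have hxp : 1 / x ^ p ≤ y ^ p := by
    rw [one_div, ← inv_rpow hx.le, ← one_div]
    exact rpow_le_rpow (by positivity) (le_add_of_nonneg_left (exp_pos 1).le) hp
  have hsum : exp 1 + 1 / x ^ p ≤ exp 2 * y ^ p := by
    have hyp : 1 ≤ y ^ p := one_le_rpow hy1 hp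
    calc exp 1 + 1 / x ^ p ≤ exp 1 * y ^ p + exp 1 * y ^ p := by
          refine add_le_add (le_mul_of_one_le_right (exp_pos 1).le hyp) (hxp.trans ?_)
          exact le_mul_of_one_le_left (by positivity) (by linarith)
      _ = 2 * (exp 1 * y ^ p) := (two_mul _).symm
      _ ≤ exp 1 * (exp 1 * y ^ p) := by gcongr
      _ = exp 2 * y ^ p := by rw [← mul_assoc, ← exp_add, one_add_one_eq_two]
  calc logWeight (x ^ p) ≤ log (exp 2 * y ^ p) := log_le_log (by positivity) hsum
    _ = 2 + p * logWeight x := by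
        rw [log_mul (exp_pos 2).ne' (by positivity), log_exp, log_rpow hy0, logWeight]
    _ ≤ (p + 2) * logWeight x := by linarith [one_le_logWeight hx]

theorem logWeight_rpow_rpow_le {x p : ℝ} (γ : ℝ) (hx : 0 < x) (hp : 0 < p) :
    logWeight (x ^ p) ^ γ ≤ (p + p⁻¹ + 2) ^ |γ| * logWeight x ^ γ := by
  have hxp : 0 < x ^ p := rpow_pos_of_pos hx p
  have hp' : 0 < p⁻¹ := inv_pos.2 hp
  have hLx := logWeight_pos hx
  have hLxp := logWeight_pos hxp
  refine rpow_le_rpow_abs_mul_rpow γ hLxp hLx ?_ ?_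
  · refine (logWeight_rpow_le hx hp.le).trans ?_
    gcongr
    linarith
  · have hback := logWeight_rpow_le hxp hp'.le
    rw [rpow_rpow_inv hx.le hp.ne'] at hback
    refine hback.trans ?_
    gcongr
    linarith

section Dilation

variable {φ : ℝ → ℝ} {a γ T : ℝ}

theorem integrableOn_rpow_mul_logWeight_rpow_mul_comp_div
    (hint : IntegrableOn (fun s => s ^ a * (1 + |log s|) ^ |γ| * φ s) (Ioi 0)) (hT : 0 < T) :
    IntegrableOn (fun τ => τ ^ a * logWeight τ ^ γ * φ (τ / T)) (Ioi 0) := by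
  rw [← mul_zero T, ← integrableOn_Ioi_comp_mul_left_iff _ _ hT]
  -- After the substitution, the integrand is that of `hint` times a bounded measurable factor.
  set m : ℝ → ℝ := fun s => logWeight (T * s) ^ γ / (1 + |log s|) ^ |γ|
  have hm : ∀ᵐ s ∂volume.restrict (Ioi 0), ‖m s‖ ≤ logWeight T ^ γ :=
    ae_restrict_of_forall_mem measurableSet_Ioi fun s (hs : 0 < s) => by
      have hL := logWeight_pos (mul_pos hT hs)
      rw [norm_of_nonneg (by positivity), div_le_iff₀' (by positivity)]
      exact logWeight_mul_rpow_le γ hT hs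
  have hmeas : AEStronglyMeasurable m (volume.restrict (Ioi 0)) :=
    Measurable.aestronglyMeasurable (by fun_prop)
  refine IntegrableOn.congr_fun ((hint.bdd_mul hmeas hm).const_mul (T ^ a)) ?_ measurableSet_Ioi
  intro s (hs : 0 < s)
  have hlog : (1 + |log s|) ^ |γ| ≠ 0 := by positivity
  simp only [m, mul_rpow hT.le hs.le, mul_div_cancel_left₀ s hT.ne']
  field_simp

theorem integral_rpow_mul_logWeight_rpow_mul_comp_div_le (hφ : ∀ s > 0, 0 ≤ φ s)
    (hint : IntegrableOn (fun s => s ^ a * (1 + |log s|) ^ |γ| * φ s) (Ioi 0)) (hT : 0 < T) :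
    ∫ τ in Ioi 0, τ ^ a * logWeight τ ^ γ * φ (τ / T) ≤
      T ^ (a + 1) * logWeight T ^ γ * ∫ s in Ioi 0, s ^ a * (1 + |log s|) ^ |γ| * φ s := by
  set F : ℝ → ℝ := fun τ => τ ^ a * logWeight τ ^ γ * φ (τ / T) with hF
  have hFint : IntegrableOn (fun s => F (T * s)) (Ioi 0) := by
    rw [integrableOn_Ioi_comp_mul_left_iff F 0 hT, mul_zero]
    exact integrableOn_rpow_mul_logWeight_rpow_mul_comp_div hint hT
  have hpt : ∀ s ∈ Ioi (0 : ℝ),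
      F (T * s) ≤ T ^ a * logWeight T ^ γ * (s ^ a * (1 + |log s|) ^ |γ| * φ s) := by
    intro s (hs : 0 < s)
    have hφs := hφ s hs
    calc F (T * s) = T ^ a * s ^ a * logWeight (T * s) ^ γ * φ s := by
          simp only [hF, mul_rpow hT.le hs.le, mul_div_cancel_left₀ s hT.ne']
      _ ≤ T ^ a * s ^ a * ((1 + |log s|) ^ |γ| * logWeight T ^ γ) * φ s := by
          gcongr
          exact logWeight_mul_rpow_le γ hT hs
      _ = T ^ a * logWeight T ^ γ * (s ^ a * (1 + |log s|) ^ |γ| * φ s) := by ring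
  calc ∫ τ in Ioi 0, F τ = T * ∫ s in Ioi 0, F (T * s) := by
        rw [integral_comp_mul_left_Ioi F 0 hT, mul_zero, smul_eq_mul, mul_inv_cancel_left₀ hT.ne']
    _ ≤ T * ∫ s in Ioi 0, T ^ a * logWeight T ^ γ * (s ^ a * (1 + |log s|) ^ |γ| * φ s) := by
        refine mul_le_mul_of_nonneg_left ?_ hT.le
        exact setIntegral_mono_on hFint (hint.const_mul _) measurableSet_Ioi hpt
    _ = T ^ (a + 1) * logWeight T ^ γ * ∫ s in Ioi 0, s ^ a * (1 + |log s|) ^ |γ| * φ s := by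
        rw [integral_const_mul, rpow_add_one hT.ne']
        ring

end Dilation

/-- The radial profile of the kernel majorant
`h_{θ,t}(x) = t ^ (-n / θ) * (1 + t ^ (-1 / θ) * |x|) ^ (-n - θ)` as a function of the volume
`τ = |x| ^ n`; the dimension `n` is replaced by a real parameter `d`. -/
noncomputable def kernelProfile (d θ t τ : ℝ) : ℝ :=
  t ^ (-d / θ) * (1 + t ^ (-1 / θ) * τ ^ (1 / d)) ^ (-d - θ)

theorem kernelProfile_eq_inv_mul_comp_div {d θ t τ : ℝ} (hd : d ≠ 0) (ht : 0 < t) (hτ : 0 ≤ τ) :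
    kernelProfile d θ t τ =
      (t ^ (d / θ))⁻¹ * (1 + (τ / t ^ (d / θ)) ^ (1 / d)) ^ (-d - θ) := by
  have hroot : (t ^ (d / θ)) ^ (1 / d) = t ^ (1 / θ) := by
    rw [← rpow_mul ht.le, div_mul_div_comm, mul_one, mul_comm θ, div_mul_cancel_left₀ hd, one_div]
  rw [kernelProfile, neg_div, neg_div, rpow_neg ht.le, rpow_neg ht.le,
    div_rpow hτ (rpow_pos_of_pos ht _).le, hroot, inv_mul_eq_div (t ^ (1 / θ))]

theorem kernelProfile_rpow {d θ t τ : ℝ} (q : ℝ) (hd : d ≠ 0) (ht : 0 < t) (hτ : 0 ≤ τ) :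
    kernelProfile d θ t τ ^ q = (t ^ (d / θ)) ^ (-q) *
      (1 + (τ / t ^ (d / θ)) ^ (1 / d)) ^ ((-d - θ) * q) := by
  rw [kernelProfile_eq_inv_mul_comp_div hd ht hτ, mul_rpow (by positivity) (by positivity),
    inv_rpow (by positivity), ← rpow_neg (by positivity), rpow_mul (x := 1 + _) (by positivity)]

theorem exists_integral_rpow_mul_logWeight_rpow_mul_kernelProfile_rpow_le {d θ a q : ℝ} (γ : ℝ)
    (hd : 0 < d) (ha : -1 < a) (ha' : a + 1 < q * (1 + θ / d)) :
    ∃ C > 0, ∀ t > 0,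
      IntegrableOn (fun τ => τ ^ a * logWeight τ ^ γ * kernelProfile d θ t τ ^ q) (Ioi 0) ∧
      ∫ τ in Ioi 0, τ ^ a * logWeight τ ^ γ * kernelProfile d θ t τ ^ q ≤
        C * (t ^ (d / θ)) ^ (a + 1 - q) * logWeight (t ^ (d / θ)) ^ γ := by
  have hdecay : a + 1 / d * ((-d - θ) * q) < -1 := by
    have hexp : 1 / d * ((-d - θ) * q) = -(q * (1 + θ / d)) := by
      field_simp
      ring
    linarith
  have hint := integrableOn_rpow_mul_one_add_abs_log_rpow_mul_one_add_rpow_rpow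
    (one_div_pos.2 hd) ha hdecay (abs_nonneg γ)
  set φ : ℝ → ℝ := fun s => (1 + s ^ (1 / d)) ^ ((-d - θ) * q)
  have hφ : ∀ s > 0, 0 ≤ φ s := fun s hs => by positivity
  set I := ∫ s in Ioi 0, s ^ a * (1 + |log s|) ^ |γ| * φ s
  have hI : 0 ≤ I := setIntegral_nonneg measurableSet_Ioi fun s (hs : 0 < s) => by positivity
  refine ⟨I + 1, by positivity, fun t ht => ?_⟩
  set T := t ^ (d / θ)
  have hT : 0 < T := rpow_pos_of_pos ht _
  have hLT : 0 < logWeight T := logWeight_pos hT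
  have hscale : EqOn (fun τ => τ ^ a * logWeight τ ^ γ * kernelProfile d θ t τ ^ q)
      (fun τ => T ^ (-q) * (τ ^ a * logWeight τ ^ γ * φ (τ / T))) (Ioi 0) := by
    intro τ (hτ : 0 < τ)
    simp only [kernelProfile_rpow q hd.ne' ht hτ.le, φ, T]
    ring
  have hφint := integrableOn_rpow_mul_logWeight_rpow_mul_comp_div hint hT
  refine ⟨IntegrableOn.congr_fun (hφint.const_mul _) hscale.symm measurableSet_Ioi, ?_⟩
  calc ∫ τ in Ioi 0, τ ^ a * logWeight τ ^ γ * kernelProfile d θ t τ ^ q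
      = T ^ (-q) * ∫ τ in Ioi 0, τ ^ a * logWeight τ ^ γ * φ (τ / T) := by
        rw [setIntegral_congr_fun measurableSet_Ioi hscale, integral_const_mul]
    _ ≤ T ^ (-q) * (T ^ (a + 1) * logWeight T ^ γ * I) := by
        gcongr
        exact integral_rpow_mul_logWeight_rpow_mul_comp_div_le hφ hint hT
    _ = I * T ^ (a + 1 - q) * logWeight T ^ γ := by
        rw [sub_eq_add_neg (a + 1), rpow_add hT (a + 1)]
        ring
    _ ≤ (I + 1) * T ^ (a + 1 - q) * logWeight T ^ γ := by
        gcongr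
        exact le_add_of_nonneg_right one_pos.le

/-- Here `ρ` stands for `1 / r`, so that `ρ = 0` is the endpoint `r = ∞`. -/
theorem stmt15_general {d θ ρ q : ℝ} (γ : ℝ) (hd : 0 < d) (hθ : 0 < θ) (hq : 0 < q)
    (hρ : ρ < 1 + 1 / q) (hρ' : 1 / q < ρ + θ / d) :
    ∃ C > 0, ∀ t > 0,
      IntegrableOn
        (fun τ => τ ^ (q * (1 - ρ)) * logWeight τ ^ γ * kernelProfile d θ t τ ^ q) (Ioi 0) ∧
      ∫ τ in Ioi 0, τ ^ (q * (1 - ρ)) * logWeight τ ^ γ * kernelProfile d θ t τ ^ q ≤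
        C * t ^ (-(d * q / θ) * (ρ - 1 / q)) * logWeight t ^ γ := by
  have hqq : q * (1 / q) = 1 := mul_one_div_cancel hq.ne'
  have hzero : -1 < q * (1 - ρ) := by linarith [mul_lt_mul_of_pos_left hρ hq]
  have hinfty : q * (1 - ρ) + 1 < q * (1 + θ / d) := by
    linarith [mul_lt_mul_of_pos_left hρ' hq]
  obtain ⟨C, hC, h⟩ :=
    exists_integral_rpow_mul_logWeight_rpow_mul_kernelProfile_rpow_le γ hd hzero hinfty
  refine ⟨C * (d / θ + (d / θ)⁻¹ + 2) ^ |γ|, by positivity, fun t ht => ⟨(h t ht).1, ?_⟩⟩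
  have hpow : (t ^ (d / θ)) ^ (q * (1 - ρ) + 1 - q) = t ^ (-(d * q / θ) * (ρ - 1 / q)) := by
    rw [← rpow_mul ht.le]
    congr 1
    field_simp
    ring
  calc ∫ τ in Ioi 0, τ ^ (q * (1 - ρ)) * logWeight τ ^ γ * kernelProfile d θ t τ ^ q
      ≤ C * t ^ (-(d * q / θ) * (ρ - 1 / q)) * logWeight (t ^ (d / θ)) ^ γ := hpow ▸ (h t ht).2
    _ ≤ C * t ^ (-(d * q / θ) * (ρ - 1 / q)) *
          ((d / θ + (d / θ)⁻¹ + 2) ^ |γ| * logWeight t ^ γ) := by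
        gcongr
        exact logWeight_rpow_rpow_le γ ht (div_pos hd hθ)
    _ = C * (d / θ + (d / θ)⁻¹ + 2) ^ |γ| * t ^ (-(d * q / θ) * (ρ - 1 / q)) *
          logWeight t ^ γ := by ring

theorem stmt15 (n : ℕ) (hn : 1 ≤ n) (θ : ℝ) (hθ0 : 0 < θ) (hθ2 : θ ≤ 2)
    (r q : ℝ) (hr : 1 ≤ r) (hrq : r ≤ q) (γ : ℝ) (hγ : r = q → 0 ≤ γ) :
    ∃ C > (0 : ℝ), ∀ t > (0 : ℝ),
      (∫ τ in Set.Ioi (0 : ℝ),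
          τ ^ (q * (1 - 1 / r)) * Real.log (Real.exp 1 + 1 / τ) ^ γ *
            (t ^ (-(n : ℝ) / θ) *
              (1 + t ^ (-1 / θ) * τ ^ (1 / (n : ℝ))) ^ (-(n : ℝ) - θ)) ^ q) ≤
        C * t ^ (-((n : ℝ) * q / θ) * (1 / r - 1 / q)) *
          Real.log (Real.exp 1 + 1 / t) ^ γ := by
  have hn0 : (0 : ℝ) < n := by exact_mod_cast hn
  have hq0 : 0 < q := by linarith
  have hr_inv : 1 / r < 1 + 1 / q := by
    linarith [one_div_le_one_div_of_le one_pos hr, one_div_pos.2 hq0]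
  have hq_inv : 1 / q < 1 / r + θ / n := by
    linarith [one_div_le_one_div_of_le (one_pos.trans_le hr) hrq, div_pos hθ0 hn0]
  obtain ⟨C, hC, h⟩ := stmt15_general γ hn0 hθ0 hq0 hr_inv hq_inv
  exact ⟨C, hC, fun t ht => (h t ht).2⟩
end
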